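/- Let S be a finite set of prime numbers and let a be a positive integer. There are only finitely many triples (x, y, w) of S-units with gcd(x, y) ≤ a for which there exist an integer n ≥ 2 and a nonzero integer z such that x + y = w·z^n. -/

import Mathlib

/-- An `S`-unit: a nonzero integer all of whose prime divisors belong to `S`. -/
def IsSUnit (S : Finset ℕ) (x : ℤ) : Prop :=
  x ≠ 0 ∧ ∀ p : ℕ, p.Prime → (p : ℤ) ∣ x → p ∈ S

/-!
The core is a lower bound at a nonarchimedean place `v` of a number field: if `u` runs through a
finitely generated group of `v`-units and `ζ` through all `v`-units, then
`v (ζ ^ n * u - 1) ≤ 2 ^ (-M)` with `ζ ^ n * u ≠ 1` forces `M ≤ ε * (h (ζ ^ n * u) + n)` once `n`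
is large in terms of `ε`. After absorbing `n`-th powers into `ζ`, the exponents of `u` in terms of
the generators are at most `n`, and Dirichlet's theorem approximates them simultaneously by `n / q`
times integers `p t`, with `q` bounded. So `Λ = ζ ^ n * ∏ g t ^ b t` and `ω = ζ ^ q * ∏ g t ^ p t`
are almost multiplicatively dependent, which makes the heights of many products `Λ ^ i * ω ^ (-J)`
small. An interpolation determinant formed from these products is nonzero by a zero estimate, has
small height, and is tiny at `v` since `Λ` is close to `1`: a contradiction. If `ω` is a root of
unity, `Λ` itself has small height and Liouville's inequality suffices.

Let `|x| ≤ |y|` in a solution of `x + y = w * z ^ n`. A prime `p` that divides `x` to a high power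
divides `y` to a bounded power. Otherwise a high power of `p` dividing `y` makes a unit close to
`1`: for large `n` the unit `(x + y) / x = w * z ^ n / x`, and for a fixed exponent `n` the unit
`(X - Y) / (X - ζ * Y)`, where `X ^ n = x + y`, `Y ^ n = y` and `ζ ^ n = 1` in a number field that
depends on `S` and `n` only. Hence the `p`-part of `y` is at most a constant times `|y| ^ ε` for
each `p ∈ S`, and multiplying over `p ∈ S` bounds `|y|`.
-/

/-! ### Nonarchimedean absolute values -/

section Nonarchimedean

variable {F : Type*} [Field F] {v : AbsoluteValue F ℝ}

lemma abv_sum_le_of_isNonarchimedean (hv : IsNonarchimedean v) {ι : Type*} {s : Finset ι}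
    {f : ι → F} {C : ℝ} (hC : 0 ≤ C) (h : ∀ i ∈ s, v (f i) ≤ C) : v (∑ i ∈ s, f i) ≤ C :=
  Finset.sum_induction f (v · ≤ C) (fun _ _ hx hy ↦ (hv _ _).trans (max_le hx hy)) (by simpa) h

lemma abv_eq_one_of_sub_one_lt (hv : IsNonarchimedean v) {x : F} (hx : v (x - 1) < 1) :
    v x = 1 := by
  simpa using hv.add_eq_right_of_lt (x := x - 1) (y := 1) (by simpa using hx)

lemma abv_pow_sub_one_le (hv : IsNonarchimedean v) {x : F} (hx : v x ≤ 1) (m : ℕ) :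
    v (x ^ m - 1) ≤ v (x - 1) := by
  rw [← geom_sum_mul, map_mul]
  refine mul_le_of_le_one_left (v.nonneg _) <|
    abv_sum_le_of_isNonarchimedean hv zero_le_one fun i _ ↦ ?_
  rw [map_pow]
  exact pow_le_one₀ (v.nonneg _) hx

/-- The units `u` of `F` with `v (u - 1) ≤ 1 / 2`, a subgroup when `v` is nonarchimedean. -/
def unitsNearOne (hv : IsNonarchimedean v) : Subgroup Fˣ where
  carrier := {u | v ((u : F) - 1) ≤ 1 / 2}
  one_mem' := by simp
  mul_mem' := fun {a b} (ha : v (a - 1) ≤ 1 / 2) (hb : v (b - 1) ≤ 1 / 2) ↦ by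
    have hva : v a = 1 := abv_eq_one_of_sub_one_lt hv (by linarith)
    have := hv (a * (b - 1)) (a - 1)
    rw [map_mul, hva, one_mul, show (a * (b - 1) + (a - 1) : F) = a * b - 1 by ring] at this
    simpa using this.trans (max_le hb ha)
  inv_mem' := fun {a} (ha : v (a - 1) ≤ 1 / 2) ↦ by
    have hva : v a = 1 := abv_eq_one_of_sub_one_lt hv (by linarith)
    have hinv : ((a⁻¹ : Fˣ) : F) - 1 = a⁻¹ * -(a - 1) := by
      rw [Units.val_inv_eq_inv_val, neg_sub, mul_sub, mul_one, inv_mul_cancel₀ a.ne_zero]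
    change v (((a⁻¹ : Fˣ) : F) - 1) ≤ 1 / 2
    rwa [hinv, Units.val_inv_eq_inv_val, map_mul, v.map_neg, map_inv₀, hva, inv_one, one_mul]

lemma mem_unitsNearOne {hv : IsNonarchimedean v} {u : Fˣ} :
    u ∈ unitsNearOne hv ↔ v ((u : F) - 1) ≤ 1 / 2 :=
  Iff.rfl

end Nonarchimedean

/-! ### Determinants of small matrices -/

section Determinant

variable {F R : Type*} [Field F] [Fintype R] [DecidableEq R] {v : AbsoluteValue F ℝ}

lemma abv_det_le_of_isNonarchimedean (hv : IsNonarchimedean v) {M : Matrix R R F} {C : ℝ}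
    (hC : 0 ≤ C) (h : ∀ i j, v (M i j) ≤ C) : v M.det ≤ C ^ Fintype.card R := by
  rw [Matrix.det_apply]
  refine abv_sum_le_of_isNonarchimedean hv (by positivity) fun σ _ ↦ ?_
  rw [v.map_units_int_smul, map_prod]
  exact (Finset.prod_le_prod (fun _ _ ↦ v.nonneg _) fun _ _ ↦ h _ _).trans_eq (by simp)

lemma sum_range_card_le_sum_of_card_filter_le {ι : Type*} {s : Finset ι} {w : ι → ℕ}
    (h : ∀ t < s.card, (s.filter (w · ≤ t)).card ≤ t + 1) :
    ∑ i ∈ Finset.range s.card, i ≤ ∑ r ∈ s, w r := by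
  -- Layer-cake summation: `w r` is the number of `t` with `t < w r`.
  have key (r : ι) : ∑ t ∈ Finset.range s.card, (if t < w r then 1 else 0) ≤ w r := by
    rw [Finset.sum_boole, Nat.cast_id]
    refine (Finset.card_le_card fun t ht ↦ ?_).trans_eq (Finset.card_range (w r))
    exact Finset.mem_range.2 (Finset.mem_filter.1 ht).2
  refine le_trans ?_ (Finset.sum_le_sum fun r _ ↦ key r)
  rw [Finset.sum_comm, ← Finset.sum_range_reflect]
  refine Finset.sum_le_sum fun t ht ↦ ?_
  have hsplit := s.card_filter_add_card_filter_not (fun r ↦ w r ≤ t)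
  have := h t (Finset.mem_range.1 ht)
  simp only [not_le] at hsplit
  rw [Finset.sum_boole, Nat.cast_id]
  omega

lemma det_mul_eq_sum {X : Type*} [Fintype X] (A : Matrix R X F) (B : Matrix X R F) :
    (A * B).det = ∑ f : R → X, (∏ r, A r (f r)) * (B.submatrix f id).det := by
  classical
  have hrow : (A * B : Matrix R R F) = fun r ↦ ∑ x, A r x • B x := by
    ext r j
    simp [Matrix.mul_apply]
  rw [hrow]
  change Matrix.detRowAlternating (fun r ↦ ∑ x, A r x • B x) = _
  rw [← AlternatingMap.coe_multilinearMap, MultilinearMap.map_sum]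
  refine Finset.sum_congr rfl fun f _ ↦ ?_
  rw [MultilinearMap.map_smul_univ]
  rfl

/-- Only injective `f` contribute to `det_mul_eq_sum`, and the weights of `card R` distinct
indices add up to at least `0 + 1 + ⋯ + (card R - 1)`. -/
lemma abv_det_mul_le {X : Type*} [Fintype X] (hv : IsNonarchimedean v) {A : Matrix R X F}
    {B : Matrix X R F} {ρ : ℝ} (hρ : 0 < ρ) (hρ1 : ρ ≤ 1) (k : R → ℕ) (w : X → ℕ)
    (hA : ∀ r x, v (A r x) * ρ ^ k r ≤ ρ ^ w x) (hB : ∀ x j, v (B x j) ≤ 1)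
    (hw : ∀ t < Fintype.card R, (Finset.univ.filter (w · ≤ t)).card ≤ t + 1) :
    v (A * B).det * ρ ^ (∑ r, k r) ≤ ρ ^ ∑ i ∈ Finset.range (Fintype.card R), i := by
  rw [← le_div_iff₀ (by positivity), det_mul_eq_sum]
  refine abv_sum_le_of_isNonarchimedean hv (by positivity) fun f _ ↦ ?_
  by_cases hf : Function.Injective f
  · have hwf : ∑ i ∈ Finset.range (Fintype.card R), i ≤ ∑ r, w (f r) := by
      refine sum_range_card_le_sum_of_card_filter_le (s := Finset.univ) fun t ht ↦ ?_
      refine (Finset.card_le_card_of_injOn f (fun r hr ↦ ?_) hf.injOn).trans (hw t ht)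
      simpa using hr
    have hdet : v (B.submatrix f id).det ≤ 1 :=
      (abv_det_le_of_isNonarchimedean hv zero_le_one fun _ _ ↦ hB _ _).trans_eq (one_pow _)
    rw [le_div_iff₀ (by positivity), map_mul, map_prod, ← Finset.prod_pow_eq_pow_sum]
    calc (∏ r, v (A r (f r))) * v (B.submatrix f id).det * ∏ r, ρ ^ k r
        = (∏ r, v (A r (f r)) * ρ ^ k r) * v (B.submatrix f id).det := by
          rw [Finset.prod_mul_distrib]; ring
      _ ≤ (∏ r, ρ ^ w (f r)) * 1 := by
          gcongr with r
          exact hA r (f r)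
      _ ≤ ρ ^ ∑ i ∈ Finset.range (Fintype.card R), i := by
          rw [mul_one, Finset.prod_pow_eq_pow_sum]
          exact pow_le_pow_of_le_one hρ.le hρ1 hwf
  · have hdet : (B.submatrix f id).det = 0 := by
      simp only [Function.Injective, not_forall] at hf
      obtain ⟨r, r', hrr, hne⟩ := hf
      exact Matrix.det_zero_of_row_eq hne (by ext; simp [hrr])
    rw [hdet, mul_zero, map_zero]
    positivity

lemma exists_submatrix_det_ne_zero {E : Type*} [Finite E] {G : Matrix R E F}
    (hG : LinearIndependent F G.row) : ∃ f : R → E, (G.submatrix id f).det ≠ 0 := by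
  have := Fintype.ofFinite E
  have hrank := hG.rank_matrix
  rw [Matrix.rank_eq_finrank_span_cols] at hrank
  obtain ⟨κ, a, ha, hspan, hli⟩ := exists_linearIndependent' F G.col
  have := Fintype.ofInjective a ha
  have hcard := finrank_span_eq_card hli
  rw [hspan, hrank] at hcard
  let e := Fintype.equivOfCardEq hcard
  refine ⟨a ∘ e, ?_⟩
  rw [← isUnit_iff_ne_zero, ← Matrix.isUnit_iff_isUnit_det,
    ← Matrix.linearIndependent_cols_iff_isUnit]
  exact hli.comp e e.injective

end Determinant

/-! ### Heights -/

section Heights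

open Height AdmissibleAbsValues Real

variable {F : Type*} [Field F] {ι : Type*} [Fintype ι]

/-- The bound `∏ i, max (w (y i)) (w (y i))⁻¹ ^ e i` for the value at `w` of a product
`∏ i, y i ^ m i` with integral exponents `|m i| ≤ e i`. -/
noncomputable def zpowBound (w : AbsoluteValue F ℝ) (y : ι → Fˣ) (e : ι → ℕ) : ℝ :=
  exp (∑ i, e i * |log (w (y i))|)

lemma one_le_zpowBound (w : AbsoluteValue F ℝ) (y : ι → Fˣ) (e : ι → ℕ) : 1 ≤ zpowBound w y e :=
  one_le_exp <| Finset.sum_nonneg fun _ _ ↦ by positivity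

lemma zpowBound_pow (w : AbsoluteValue F ℝ) (y : ι → Fˣ) (e : ι → ℕ) (n : ℕ) :
    zpowBound w y e ^ n = zpowBound w y (n • e) := by
  rw [zpowBound, zpowBound, ← exp_nat_mul, Finset.mul_sum]
  simp [mul_assoc]

lemma abv_prod_zpow_le (w : AbsoluteValue F ℝ) (y : ι → Fˣ) {m : ι → ℤ} {e : ι → ℕ}
    (h : ∀ i, |m i| ≤ e i) : w ((∏ i, y i ^ m i : Fˣ) : F) ≤ zpowBound w y e := by
  have hpos (u : Fˣ) : 0 < w u := w.pos u.ne_zero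
  rw [zpowBound, ← log_le_iff_le_exp (hpos _), Units.coe_prod, map_prod,
    log_prod fun i _ ↦ (hpos _).ne']
  refine Finset.sum_le_sum fun i _ ↦ ?_
  rw [Units.val_zpow_eq_zpow_val, map_zpow₀, log_zpow]
  refine (le_abs_self _).trans ?_
  rw [abs_mul]
  gcongr
  exact_mod_cast h i

variable [AdmissibleAbsValues F]

lemma hasFiniteSupport_posLog_abv (x : F) :
    (fun w : nonarchAbsVal (K := F) ↦ log⁺ (w.val x)).HasFiniteSupport := by
  rcases eq_or_ne x 0 with rfl | hx
  · simp [Function.HasFiniteSupport, Function.support]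
  · exact (hasFiniteMulSupport hx).subset fun w hw h ↦ hw (by simp_all)

lemma two_mul_logHeight₁_eq (x : F) :
    2 * logHeight₁ x = (archAbsVal.map fun w : AbsoluteValue F ℝ ↦ |log (w x)|).sum +
      ∑ᶠ w : nonarchAbsVal (K := F), |log (w.val x)| := by
  have habs (t : ℝ) : |log t| = log⁺ t + log⁺ t⁻¹ := by
    have h₁ := posLog_sub_posLog_inv (x := t)
    have h₂ := half_mul_log_add_log_abs (x := t)
    linarith
  rw [two_mul]
  nth_rw 2 [← logHeight₁_inv]
  simp only [logHeight₁_eq, habs, map_inv₀, Multiset.sum_map_add]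
  rw [finsum_add_distrib (hasFiniteSupport_posLog_abv x)
    (by simpa only [map_inv₀] using hasFiniteSupport_posLog_abv x⁻¹)]
  ring

lemma abv_le_mulHeight₁ {v : AbsoluteValue F ℝ} (hv : v ∈ nonarchAbsVal (K := F)) (x : F) :
    v x ≤ mulHeight₁ x := by
  rcases eq_or_ne x 0 with rfl | hx
  · simp
  rw [← log_le_log_iff (v.pos hx) (mulHeight₁_pos x), ← logHeight₁_eq_log_mulHeight₁,
    logHeight₁_eq]
  calc log (v x) ≤ log⁺ (v x) := le_max_right _ _
    _ ≤ ∑ᶠ w : nonarchAbsVal (K := F), log⁺ (w.val x) :=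
      single_le_finsum ⟨v, hv⟩ (hasFiniteSupport_posLog_abv x) fun _ ↦ posLog_nonneg
    _ ≤ _ := le_add_of_nonneg_left <| Multiset.sum_nonneg fun t ht ↦ by
      obtain ⟨w, -, rfl⟩ := Multiset.mem_map.1 ht
      exact posLog_nonneg

lemma one_le_mulHeight₁_mul_abv {v : AbsoluteValue F ℝ} (hv : v ∈ nonarchAbsVal (K := F)) {x : F}
    (hx : x ≠ 0) : 1 ≤ mulHeight₁ x * v x := by
  have := abv_le_mulHeight₁ hv x⁻¹
  rwa [mulHeight₁_inv, map_inv₀, inv_le_iff_one_le_mul₀ (v.pos hx)] at this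

lemma logHeight₁_le_of_abv_le_zpowBound {x : F} {y : ι → Fˣ} {e : ι → ℕ} {C : ℝ} (hC : 1 ≤ C)
    (harch : ∀ w ∈ archAbsVal (K := F), w x ≤ C * zpowBound w y e)
    (hnonarch : ∀ w ∈ nonarchAbsVal (K := F), w x ≤ zpowBound w y e) :
    logHeight₁ x ≤ totalWeight F * log C + 2 * ∑ i, e i * logHeight₁ (y i : F) := by
  have hlog (w : AbsoluteValue F ℝ) {B : ℝ} (hB : 1 ≤ B) (h : w x ≤ B * zpowBound w y e) :
      log⁺ (w x) ≤ log B + ∑ i, e i * |log (w (y i))| := by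
    have h1 : 1 ≤ B * zpowBound w y e := one_le_mul_of_one_le_of_one_le hB (one_le_zpowBound ..)
    refine (posLog_le_posLog (w.nonneg _) h).trans_eq ?_
    rw [posLog_eq_log (h1.trans (le_abs_self _)), zpowBound,
      log_mul (by positivity) (exp_pos _).ne', log_exp]
  have hfin (i : ι) :
      (fun w : nonarchAbsVal (K := F) ↦ (e i : ℝ) * |log (w.val (y i))|).HasFiniteSupport :=
    (hasFiniteMulSupport (y i).ne_zero).subset fun w hw h ↦ hw (by simp_all)
  have hA : (archAbsVal.map fun w : AbsoluteValue F ℝ ↦ log⁺ (w x)).sum ≤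
      totalWeight F * log C +
        ∑ i, e i * (archAbsVal.map fun w : AbsoluteValue F ℝ ↦ |log (w (y i))|).sum := by
    refine (Multiset.sum_map_le_sum_map _ _ fun w hw ↦ hlog w hC (harch w hw)).trans_eq ?_
    simp [Multiset.sum_map_add, Multiset.sum_map_sum, Multiset.sum_map_mul_left, totalWeight]
  have hN : ∑ᶠ w : nonarchAbsVal (K := F), log⁺ (w.val x) ≤
      ∑ i, e i * ∑ᶠ w : nonarchAbsVal (K := F), |log (w.val (y i))| := by
    simp only [mul_finsum]
    rw [← finsum_sum_comm _ _ fun i _ ↦ hfin i]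
    refine finsum_le_finsum' (hasFiniteSupport_posLog_abv x) (by fun_prop) fun w ↦ ?_
    simpa using hlog w.1 le_rfl (by simpa using hnonarch w.1 w.2)
  calc logHeight₁ x ≤ _ := (logHeight₁_eq x).trans_le (add_le_add hA hN)
    _ = totalWeight F * log C + ∑ i, e i * (2 * logHeight₁ (y i : F)) := by
      rw [add_assoc, ← Finset.sum_add_distrib]
      simp only [two_mul_logHeight₁_eq, mul_add]
    _ = _ := by
      rw [Finset.mul_sum]
      simp only [mul_left_comm]

lemma logHeight₁_intCast_le {m : ℤ} {B : ℝ} (hB : 1 ≤ B) (hm : |(m : ℝ)| ≤ B) :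
    logHeight₁ (m : F) ≤ totalWeight F * log B := by
  have hnat : logHeight₁ (m : F) = logHeight₁ (m.natAbs : F) := by
    rcases Int.natAbs_eq m with h | h <;> rw [h] <;> simp
  rcases eq_or_ne m 0 with rfl | hm0
  · simpa using mul_nonneg (Nat.cast_nonneg _) (log_nonneg hB)
  have hsum := logHeight₁_sum_le (Finset.range m.natAbs) fun _ ↦ (1 : F)
  simp only [Finset.sum_const, Finset.card_range, nsmul_one, logHeight₁_one, smul_zero,
    add_zero] at hsum
  rw [hnat]
  refine hsum.trans ?_
  gcongr
  rwa [Nat.cast_natAbs, Int.cast_abs]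

end Heights

/-! ### A zero estimate for exponential polynomials -/

section ZeroEstimate

open Polynomial

lemma coeff_prod_sum_of_natDegree_le {A ι : Type*} [CommRing A] (s : Finset ι) {f : ι → A[X]}
    {d : ι → ℕ} (h : ∀ i ∈ s, (f i).natDegree ≤ d i) :
    (∏ i ∈ s, f i).coeff (∑ i ∈ s, d i) = ∏ i ∈ s, (f i).coeff (d i) := by
  classical
  induction s using Finset.induction_on with
  | empty => simp
  | insert a s ha ih =>
    rw [Finset.forall_mem_insert] at h
    rw [Finset.prod_insert ha, Finset.sum_insert ha, Finset.prod_insert ha, ← ih h.2]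
    exact coeff_mul_add_eq_of_natDegree_le h.1
      ((natDegree_prod_le _ _).trans (Finset.sum_le_sum h.2))

variable {A R : Type*} [CommRing A] [Fintype R] [DecidableEq R] {M : Matrix R R A[X]} {d : R → ℕ}

lemma natDegree_det_le_sum (h : ∀ i j, (M i j).natDegree ≤ d j) :
    M.det.natDegree ≤ ∑ j, d j := by
  rw [Matrix.det_apply]
  refine natDegree_sum_le_of_forall_le _ _ fun σ _ ↦ (natDegree_smul_le _ _).trans ?_
  exact (natDegree_prod_le _ _).trans (Finset.sum_le_sum fun j _ ↦ h _ j)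

lemma coeff_det_sum (h : ∀ i j, (M i j).natDegree ≤ d j) :
    M.det.coeff (∑ j, d j) = (Matrix.of fun i j ↦ (M i j).coeff (d j)).det := by
  simp only [Matrix.det_apply, finsetSum_coeff, coeff_smul, Matrix.of_apply]
  refine Finset.sum_congr rfl fun σ _ ↦ ?_
  rw [coeff_prod_sum_of_natDegree_le _ fun j _ ↦ h _ j]

variable {F : Type*} [Field F] {n : ℕ}

/-- The matrix whose row `e` represents the shift by `e` of the exponential polynomial
`z ↦ ∑ t, P t (z) * β t ^ z`. -/
noncomputable def shiftMatrix (P : Fin n → F[X]) (β : Fin n → F) : Matrix (Fin n) (Fin n) F[X] :=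
  .of fun e t ↦ taylor (e : F) (P t) * C (β t ^ (e : ℕ))

lemma natDegree_shiftMatrix_le (P : Fin n → F[X]) (β : Fin n → F) (e t : Fin n) :
    (shiftMatrix P β e t).natDegree ≤ (P t).natDegree :=
  (natDegree_mul_C_le _ _).trans (natDegree_taylor _ _).le

lemma det_shiftMatrix_ne_zero {P : Fin n → F[X]} {β : Fin n → F} (hP : ∀ t, P t ≠ 0)
    (hβ : Function.Injective β) : (shiftMatrix P β).det ≠ 0 := by
  suffices h : (shiftMatrix P β).det.coeff (∑ t, (P t).natDegree) ≠ 0 from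
    fun h0 ↦ h (by rw [h0, coeff_zero])
  have hlead : (Matrix.of fun e t ↦ (shiftMatrix P β e t).coeff (P t).natDegree) =
      Matrix.of fun e t ↦ (P t).leadingCoeff * (Matrix.vandermonde β).transpose e t := by
    ext e t
    simp [-map_pow, shiftMatrix, Matrix.vandermonde_apply]
  rw [coeff_det_sum (natDegree_shiftMatrix_le P β), hlead, Matrix.det_mul_row, Matrix.det_transpose]
  exact mul_ne_zero (Finset.prod_ne_zero_iff.2 fun t _ ↦ leadingCoeff_ne_zero.2 (hP t))
    (Matrix.det_vandermonde_ne_zero_iff.2 hβ)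

lemma card_le_sum_natDegree {P : Fin n → F[X]} {β : Fin n → F} (hP : ∀ t, P t ≠ 0)
    (hβ : Function.Injective β) {Z : Finset F}
    (hZ : ∀ z ∈ Z, ∃ c : Fin n → F, c ≠ 0 ∧
      ∀ e < n, ∑ t, (P t).eval (z + e) * β t ^ e * c t = 0) :
    Z.card ≤ ∑ t, (P t).natDegree := by
  by_contra! hcard
  refine det_shiftMatrix_ne_zero hP hβ <|
    eq_zero_of_natDegree_lt_card_of_eval_eq_zero' _ Z (fun z hz ↦ ?_)
      ((natDegree_det_le_sum (natDegree_shiftMatrix_le P β)).trans_lt hcard)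
  obtain ⟨c, hc0, hc⟩ := hZ z hz
  rw [← coe_evalRingHom, RingHom.map_det, ← Matrix.exists_mulVec_eq_zero_iff]
  refine ⟨c, hc0, funext fun e ↦ ?_⟩
  simpa [Matrix.mulVec, dotProduct, shiftMatrix, taylor_eval] using hc e e.2

lemma eq_zero_of_sum_eval_mul_pow_eq_zero {L K : ℕ} {P : Fin L → F[X]} {β : Fin L → F}
    (hP : ∀ l, (P l).natDegree < K) (hβ : Function.Injective β) {Z : Finset F}
    (hcard : K * L ≤ Z.card)
    (hZ : ∀ z ∈ Z, ∃ c : Fin L → F, (∀ l, c l ≠ 0) ∧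
      ∀ e < L, ∑ l, (P l).eval (z + e) * β l ^ e * c l = 0) :
    P = 0 := by
  classical
  by_contra hne
  obtain ⟨l₀, hl₀⟩ := Function.ne_iff.1 hne
  let s : Finset (Fin L) := Finset.univ.filter (P · ≠ 0)
  let σ := s.orderEmbOfFin rfl
  have hs : s.card ≤ L := (Finset.card_le_univ s).trans_eq (Fintype.card_fin L)
  have hs0 : 0 < s.card := Finset.card_pos.2 ⟨l₀, Finset.mem_filter.2 ⟨Finset.mem_univ _, hl₀⟩⟩
  have hPσ (t : Fin s.card) : P (σ t) ≠ 0 :=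
    (Finset.mem_filter.1 (s.orderEmbOfFin_mem rfl t)).2
  have hsum (f : Fin L → F) (hf : ∀ l, P l = 0 → f l = 0) : ∑ t, f (σ t) = ∑ l, f l := by
    rw [← Finset.sum_filter_of_ne fun l _ h ↦ mt (hf l) h]
    exact (Finset.sum_map _ σ.toEmbedding f).symm.trans
      (by rw [s.map_orderEmbOfFin_univ rfl])
  have hle : Z.card ≤ ∑ t, (P (σ t)).natDegree := by
    refine card_le_sum_natDegree hPσ (hβ.comp σ.injective) fun z hz ↦ ?_
    obtain ⟨c, hc0, hc⟩ := hZ z hz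
    refine ⟨c ∘ σ, fun h ↦ hc0 _ (congrFun h ⟨0, hs0⟩), fun e he ↦ ?_⟩
    rw [← hc e (he.trans_le hs)]
    exact hsum (fun l ↦ (P l).eval (z + e) * β l ^ e * c l) fun l hl ↦ by simp [hl]
  have hlt : ∑ t, (P (σ t)).natDegree < K * L :=
    calc ∑ t, (P (σ t)).natDegree < ∑ _t : Fin s.card, K :=
          Finset.sum_lt_sum_of_nonempty ⟨⟨0, hs0⟩, Finset.mem_univ _⟩ fun t _ ↦ hP _
      _ = s.card * K := by simp
      _ ≤ K * L := by rw [mul_comm]; gcongr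
  omega

end ZeroEstimate

/-! ### Interpolation determinants -/

section Interpolation

open Polynomial

lemma choose_mul_pow_eq_sum {A : Type*} [CommRing A] (ω : A) {j N : ℕ} (h : j < N) (k : ℕ) :
    j.choose k * ω ^ j =
      ∑ i ∈ Finset.range N, i.choose k * ω ^ k * (ω - 1) ^ (i - k) * j.choose i := by
  rcases lt_or_ge j k with hk | hk
  · rw [Nat.choose_eq_zero_of_lt hk, Nat.cast_zero, zero_mul, Finset.sum_eq_zero]
    intro i _
    rcases lt_or_ge i k with hi | hi
    · simp [Nat.choose_eq_zero_of_lt hi]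
    · simp [Nat.choose_eq_zero_of_lt (hk.trans_le hi)]
  obtain ⟨d, rfl⟩ := Nat.exists_eq_add_of_le hk
  have hω : ω ^ d = ∑ m ∈ Finset.range (d + 1), (ω - 1) ^ m * d.choose m := by
    simpa using add_pow (ω - 1) 1 d
  have hchoose (m : ℕ) :
      ((k + m).choose k * (k + d).choose (k + m) : A) = (k + d).choose k * d.choose m := by
    have := Nat.choose_mul (n := k + d) (k.le_add_right m)
    simp only [Nat.add_sub_cancel_left] at this
    exact_mod_cast congrArg (Nat.cast (R := A)) ((mul_comm _ _).trans this)
  obtain ⟨r, rfl⟩ := Nat.exists_eq_add_of_lt h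
  rw [show k + d + r + 1 = k + (d + 1 + r) by ring, Finset.sum_range_add, Finset.sum_eq_zero,
    zero_add, Finset.sum_range_add _ (d + 1), Finset.sum_eq_zero (s := Finset.range r), add_zero,
    pow_add, hω, Finset.mul_sum, Finset.mul_sum]
  · refine Finset.sum_congr rfl fun m _ ↦ ?_
    rw [Nat.add_sub_cancel_left]
    linear_combination (-ω ^ k * (ω - 1) ^ m) * hchoose m
  · intro i _
    rw [Nat.choose_eq_zero_of_lt (n := k + d) (by omega), Nat.cast_zero, mul_zero]
  · intro i hi
    simp [Nat.choose_eq_zero_of_lt (Finset.mem_range.1 hi)]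

lemma choose_le_three_mul_pow {T K J k : ℕ} (hT : 1 ≤ T) (hk : k ≤ K) (hJ : J ≤ T * K) :
    (J.choose k : ℝ) ≤ (3 * T : ℝ) ^ K := by
  have hT1 : (1 : ℝ) ≤ T := by exact_mod_cast hT
  have hJ' : (J : ℝ) / T ≤ K := by
    rw [div_le_iff₀ (by positivity), mul_comm]
    exact_mod_cast hJ
  -- One term of the binomial expansion of `(1 / T + 1) ^ J`.
  have hterm : (1 / (T : ℝ)) ^ k * J.choose k ≤ (1 / (T : ℝ) + 1) ^ J := by
    rcases lt_or_ge J k with hJk | hJk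
    · rw [Nat.choose_eq_zero_of_lt hJk, Nat.cast_zero, mul_zero]
      positivity
    rw [add_pow]
    have := Finset.single_le_sum
      (f := fun m ↦ (1 / (T : ℝ)) ^ m * 1 ^ (J - m) * (J.choose m : ℝ))
      (s := Finset.range (J + 1)) (fun _ _ ↦ by positivity) (Finset.mem_range_succ_iff.2 hJk)
    simpa using this
  have hexp : (1 / (T : ℝ) + 1) ^ J ≤ 3 ^ K :=
    calc (1 / (T : ℝ) + 1) ^ J ≤ Real.exp (1 / T) ^ J := by
          gcongr
          exact Real.add_one_le_exp _
      _ = Real.exp (J / T) := by rw [← Real.exp_nat_mul, mul_one_div]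
      _ ≤ Real.exp K := by gcongr
      _ = Real.exp 1 ^ K := by rw [← Real.exp_nat_mul, mul_one]
      _ ≤ 3 ^ K := by
          gcongr
          exact Real.exp_one_lt_three.le
  calc (J.choose k : ℝ) = (T : ℝ) ^ k * ((1 / (T : ℝ)) ^ k * J.choose k) := by
        rw [← mul_assoc, ← mul_pow, mul_one_div_cancel (by positivity), one_pow, one_mul]
    _ ≤ (T : ℝ) ^ K * 3 ^ K := by
        gcongr
        exact hterm.trans hexp
    _ = (3 * T : ℝ) ^ K := by rw [mul_pow, mul_comm]

variable {F : Type*} [Field F]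

lemma eq_zero_of_sum_mul_choose_eq_zero {K : ℕ} {c : Fin K → F}
    (h : ∀ n < K, ∑ k, c k * n.choose k = 0) : c = 0 := by
  suffices ∀ (n : ℕ) (hn : n < K), c ⟨n, hn⟩ = 0 from funext fun k ↦ this k k.2
  intro n
  induction n using Nat.strong_induction_on with
  | _ n ih =>
    intro hn
    have hsum := h n hn
    rw [Fintype.sum_eq_single (⟨n, hn⟩ : Fin K)] at hsum
    · simpa using hsum
    · intro k hk
      rcases lt_or_gt_of_ne (Fin.val_ne_iff.2 hk) with hlt | hgt
      · rw [ih k hlt k.2, zero_mul]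
      · rw [Nat.choose_eq_zero_of_lt hgt, Nat.cast_zero, mul_zero]

variable {K L : ℕ} {E : Type*}

/-- The interpolation matrix: its columns are the values of the functions
`(J, θ) ↦ (J choose k) * θ ^ l`, for `k < K` and `l < L`, at the points `(J c, θ c)`. -/
def interpMatrix (K L : ℕ) (J : E → ℕ) (θ : E → F) : Matrix (Fin K × Fin L) E F :=
  .of fun r c ↦ (J c).choose r.1 * θ c ^ (r.2 : ℕ)

lemma linearIndependent_row_interpMatrix [CharZero F] [Finite E] {J : E → ℕ} {θ : E → F} {ω : F}
    (hω : Function.Injective fun l : Fin L ↦ ω ^ (l : ℕ)) {Z : Finset ℕ} (hZ : K * L ≤ Z.card)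
    (hcol : ∀ z ∈ Z, ∃ χ : F, χ ≠ 0 ∧ ∀ e < L, ∃ c, J c = z + e ∧ θ c = χ * ω ^ e) :
    LinearIndependent F (interpMatrix K L J θ).row := by
  rw [Fintype.linearIndependent_iff]
  intro g hg
  rcases K.eq_zero_or_pos with rfl | hK
  · exact fun r ↦ r.1.elim0
  let P (l : Fin L) : F[X] := ∑ k : Fin K, C (g (k, l) / (k : ℕ).factorial) * descPochhammer F k
  have hPeval (l : Fin L) (n : ℕ) : (P l).eval (n : F) = ∑ k : Fin K, g (k, l) * n.choose k := by
    simp only [P, eval_finsetSum, eval_mul, eval_C, Nat.cast_choose_eq_descPochhammer_div,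
      div_mul_eq_mul_div, mul_div_assoc]
  have hPdeg (l : Fin L) : (P l).natDegree < K := by
    refine (natDegree_sum_le_of_forall_le (n := K - 1) _ _ fun k _ ↦ ?_).trans_lt (by omega)
    refine (natDegree_C_mul_le _ _).trans ((descPochhammer_natDegree F k).trans_le ?_)
    omega
  have hP : P = 0 := by
    refine eq_zero_of_sum_eval_mul_pow_eq_zero hPdeg hω (Z := Z.map Nat.castEmbedding)
      (by rwa [Finset.card_map]) fun z hz ↦ ?_
    obtain ⟨n, hn, rfl⟩ := Finset.mem_map.1 hz
    obtain ⟨χ, hχ0, hχ⟩ := hcol n hn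
    refine ⟨fun l ↦ χ ^ (l : ℕ), fun l ↦ pow_ne_zero _ hχ0, fun e he ↦ ?_⟩
    obtain ⟨c, hJ, hθ⟩ := hχ e he
    have hgc : ∑ r, g r * interpMatrix K L J θ r c = 0 := by simpa using congrFun hg c
    rw [Fintype.sum_prod_type_right] at hgc
    rw [← hgc]
    refine Finset.sum_congr rfl fun l _ ↦ ?_
    rw [Nat.castEmbedding_apply, ← Nat.cast_add, hPeval, Finset.sum_mul, Finset.sum_mul]
    refine Finset.sum_congr rfl fun k _ ↦ ?_
    rw [interpMatrix, Matrix.of_apply, hJ, hθ]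
    ring
  rintro ⟨k, l⟩
  refine congrFun (eq_zero_of_sum_mul_choose_eq_zero (c := fun k ↦ g (k, l)) fun n _ ↦ ?_) k
  rw [← hPeval, hP, Pi.zero_apply, eval_zero]

end Interpolation

/-! ### Bounds for interpolation determinants -/

section InterpolationBounds

open Height AdmissibleAbsValues Real

variable {F : Type*} [Field F] {v : AbsoluteValue F ℝ} {K L : ℕ}

lemma exists_det_interpMatrix_ne_zero [CharZero F] {I A : ℕ} {Λ ω : F} (hΛ : Λ ≠ 0) (hω0 : ω ≠ 0)
    (hω : Function.Injective fun l : Fin L ↦ ω ^ (l : ℕ)) {j : ℕ → ℕ}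
    (hj : Function.Injective fun p : Fin I × Fin A ↦ j p.1 + p.2) (hKL : K * L ≤ I * A) :
    ∃ f : Fin K × Fin L → Fin I × Fin (A + L),
      (interpMatrix K L (fun c ↦ j (f c).1 + (f c).2)
        fun c ↦ Λ ^ ((f c).1 : ℕ) * ω ^ (j (f c).1 + (f c).2)).det ≠ 0 := by
  refine exists_submatrix_det_ne_zero (G := interpMatrix K L (E := Fin I × Fin (A + L))
    (fun p ↦ j p.1 + p.2) fun p ↦ Λ ^ (p.1 : ℕ) * ω ^ (j p.1 + p.2)) ?_
  refine linearIndependent_row_interpMatrix hω (Z := Finset.univ.map ⟨_, hj⟩)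
    (by simpa using hKL) fun z hz ↦ ?_
  obtain ⟨⟨i, a⟩, -, rfl⟩ := Finset.mem_map.1 hz
  refine ⟨Λ ^ (i : ℕ) * ω ^ (j i + a), by positivity, fun e he ↦
    ⟨(i, ⟨a + e, by omega⟩), (add_assoc ..).symm, ?_⟩⟩
  simp only [mul_assoc, ← pow_add, add_assoc]

lemma abv_newtonCoeff_mul_le (hv : IsNonarchimedean v) {ω : F} (hω1 : v ω = 1)
    (hω : v (ω - 1) ≤ 1 / 2) (i k : ℕ) :
    v (i.choose k * ω ^ k * (ω - 1) ^ (i - k)) * (1 / 2) ^ k ≤ (1 / 2) ^ i := by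
  rcases lt_or_ge i k with hik | hik
  · simp [Nat.choose_eq_zero_of_lt hik]
  rw [map_mul, map_mul, map_pow, map_pow, hω1, one_pow, mul_one]
  calc v (i.choose k) * v (ω - 1) ^ (i - k) * (1 / 2) ^ k
      ≤ 1 * (1 / 2) ^ (i - k) * (1 / 2) ^ k := by
        gcongr
        exact hv.apply_natCast_le_one
    _ = (1 / 2) ^ i := by rw [one_mul, ← pow_add, Nat.sub_add_cancel hik]

lemma interpMatrix_eq_fromCols_mul_fromRows (Λ ω : F) (g : Fin K × Fin L → ℕ)
    {J : Fin K × Fin L → ℕ} {B : ℕ} (hB : ∀ c, J c < B) :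
    interpMatrix K L J (fun c ↦ Λ ^ g c * ω ^ J c) =
      Matrix.fromCols
        (Matrix.of fun (r : Fin K × Fin L) (i : Fin B) ↦
          (i : ℕ).choose r.1 * (ω ^ (r.2 : ℕ)) ^ (r.1 : ℕ) * (ω ^ (r.2 : ℕ) - 1) ^ (i - r.1 : ℕ))
        (Matrix.of fun (r c : Fin K × Fin L) ↦
          (J c).choose r.1 * (ω ^ (r.2 : ℕ)) ^ J c * (Λ ^ (g c * r.2) - 1)) *
      Matrix.fromRows (Matrix.of fun (i : Fin B) c ↦ ((J c).choose i : F))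
        (1 : Matrix (Fin K × Fin L) (Fin K × Fin L) F) := by
  rw [Matrix.fromCols_mul_fromRows, mul_one]
  ext r c
  rw [Matrix.add_apply, Matrix.mul_apply]
  simp only [interpMatrix, Matrix.of_apply]
  rw [Fin.sum_univ_eq_sum_range fun i ↦ (i.choose r.1 * (ω ^ (r.2 : ℕ)) ^ (r.1 : ℕ) *
    (ω ^ (r.2 : ℕ) - 1) ^ (i - r.1 : ℕ) * (J c).choose i : F), ← choose_mul_pow_eq_sum _ (hB c)]
  ring

lemma card_filter_sumElim_le {R : Type*} [Fintype R] (B : ℕ) {N t : ℕ} (ht : t < N) :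
    (Finset.univ.filter fun x : Fin B ⊕ R ↦
      Sum.elim (fun i : Fin B ↦ (i : ℕ)) (fun _ : R ↦ N) x ≤ t).card ≤ t + 1 := by
  rw [← Finset.card_range (t + 1)]
  refine Finset.card_le_card_of_injOn (Sum.elim (fun i ↦ (i : ℕ)) fun _ ↦ N) (fun x hx ↦ ?_) ?_
  · simpa [Nat.lt_succ_iff] using hx
  · rintro (i | c) _ (i' | c') _ h <;> simp_all [Fin.ext_iff]
    all_goals omega

/-- Modulo `2 ^ (-K * L)` the powers of `Λ` can be ignored, and then Newton's expansion
`choose_mul_pow_eq_sum` writes the matrix as a product to which `abv_det_mul_le` applies. -/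
lemma abv_det_interpMatrix_le (hv : IsNonarchimedean v) {Λ ω : F}
    (hΛ : v (Λ - 1) ≤ (1 / 2) ^ (K * L)) (hω : v (ω - 1) ≤ 1 / 2) (g J : Fin K × Fin L → ℕ) :
    v (interpMatrix K L J fun c ↦ Λ ^ g c * ω ^ J c).det *
      (1 / 2) ^ (∑ r : Fin K × Fin L, (r.1 : ℕ)) ≤ (1 / 2) ^ ∑ i ∈ Finset.range (K * L), i := by
  have hω1 : v ω = 1 := abv_eq_one_of_sub_one_lt hv (by linarith)
  have hωl1 (l : ℕ) : v (ω ^ l) = 1 := by rw [map_pow, hω1, one_pow]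
  have hωl (l : ℕ) : v (ω ^ l - 1) ≤ 1 / 2 := (abv_pow_sub_one_le hv hω1.le l).trans hω
  obtain ⟨B, hB⟩ : ∃ B, ∀ c, J c < B := by
    obtain ⟨B, hB⟩ := (Set.finite_range J).bddAbove
    exact ⟨B + 1, fun c ↦ Nat.lt_succ_of_le (hB ⟨c, rfl⟩)⟩
  have hcard : Fintype.card (Fin K × Fin L) = K * L := by simp
  rw [interpMatrix_eq_fromCols_mul_fromRows Λ ω g hB, ← hcard]
  refine abv_det_mul_le hv one_half_pos one_half_lt_one.le (fun r ↦ r.1)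
    (Sum.elim (fun i : Fin B ↦ (i : ℕ)) fun _ : Fin K × Fin L ↦ K * L) ?_ ?_
    fun t ht ↦ card_filter_sumElim_le B (hcard ▸ ht)
  · rintro r (i | c)
    · exact abv_newtonCoeff_mul_le hv (hωl1 _) (hωl _) i r.1
    have hKL : 0 < K * L := Nat.mul_pos r.1.pos r.2.pos
    have hΛ1 : v Λ = 1 := abv_eq_one_of_sub_one_lt hv <|
      hΛ.trans_lt (pow_lt_one₀ (by norm_num) (by norm_num) hKL.ne')
    refine (mul_le_of_le_one_right (v.nonneg _) (pow_le_one₀ (by norm_num) (by norm_num))).trans ?_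
    simp only [Matrix.fromCols_apply_inr, Matrix.of_apply, map_mul, map_pow _ (_ : F) (J c), hωl1,
      one_pow, mul_one]
    exact (mul_le_of_le_one_left (v.nonneg _) hv.apply_natCast_le_one).trans
      ((abv_pow_sub_one_le hv hΛ1.le _).trans hΛ)
  · rintro (i | c') c
    · exact hv.apply_natCast_le_one
    · rw [Matrix.fromRows_apply_inr, Matrix.one_apply]
      split_ifs <;> simp

variable {ι : Type*} [Fintype ι] {y : ι → Fˣ} {e : ι → ℕ} {θ : Fin K × Fin L → F}

lemma abv_pow_le_zpowBound_pow (hθ : ∀ c, v (θ c) ≤ zpowBound v y e) (l : Fin L)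
    (c : Fin K × Fin L) : v (θ c ^ (l : ℕ)) ≤ zpowBound v y e ^ L := by
  rw [map_pow]
  exact (pow_le_pow_left₀ (v.nonneg _) (hθ c) _).trans
    (pow_le_pow_right₀ (one_le_zpowBound v y e) l.2.le)

lemma abv_interpMatrix_le {T : ℕ} (hT : 1 ≤ T) {J : Fin K × Fin L → ℕ} (hJ : ∀ c, J c ≤ T * K)
    (hθ : ∀ c, v (θ c) ≤ zpowBound v y e) (r c : Fin K × Fin L) :
    v (interpMatrix K L J θ r c) ≤ (3 * T) ^ K * zpowBound v y e ^ L := by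
  rw [interpMatrix, Matrix.of_apply, map_mul]
  gcongr
  · exact (v.apply_nat_le_self _).trans (choose_le_three_mul_pow hT r.1.2.le (hJ c))
  · exact abv_pow_le_zpowBound_pow hθ r.2 c

lemma abv_interpMatrix_le_of_isNonarchimedean (hv : IsNonarchimedean v) (J : Fin K × Fin L → ℕ)
    (hθ : ∀ c, v (θ c) ≤ zpowBound v y e) (r c : Fin K × Fin L) :
    v (interpMatrix K L J θ r c) ≤ zpowBound v y e ^ L := by
  rw [interpMatrix, Matrix.of_apply, map_mul]
  exact (mul_le_of_le_one_left (v.nonneg _) hv.apply_natCast_le_one).trans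
    (abv_pow_le_zpowBound_pow hθ r.2 c)

variable [AdmissibleAbsValues F]

lemma logHeight₁_det_interpMatrix_le (hK : 1 ≤ K) (hL : 1 ≤ L) {T : ℕ} (hT : 1 ≤ T)
    {J : Fin K × Fin L → ℕ} (hJ : ∀ c, J c ≤ T * K)
    (hθ : ∀ w : AbsoluteValue F ℝ, ∀ c, w (θ c) ≤ zpowBound w y e) :
    logHeight₁ (interpMatrix K L J θ).det ≤
      K * L * (totalWeight F * (log (K * L) + K * log (3 * T)) +
        2 * L * ∑ i, e i * logHeight₁ (y i : F)) := by
  have hKL : (1 : ℝ) ≤ K * L := by exact_mod_cast Nat.mul_pos hK hL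
  have hT1 : (1 : ℝ) ≤ 3 * T := by
    have : (1 : ℝ) ≤ T := by exact_mod_cast hT
    linarith
  have hcard : Fintype.card (Fin K × Fin L) = K * L := by simp
  refine (logHeight₁_le_of_abv_le_zpowBound (y := y) (e := (L * (K * L)) • e)
    (C := ((K * L) * (3 * T) ^ K) ^ (K * L)) ?_ (fun w _ ↦ ?_) fun w hw ↦ ?_).trans_eq ?_
  · exact one_le_pow₀ (one_le_mul_of_one_le_of_one_le hKL (one_le_pow₀ hT1))
  · have hdet := Matrix.det_le (abv := w) (abv_interpMatrix_le hT hJ (hθ w))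
    rw [hcard, nsmul_eq_mul] at hdet
    calc w (interpMatrix K L J θ).det
        ≤ (K * L : ℝ) ^ (K * L) * ((3 * T) ^ K * zpowBound w y e ^ L) ^ (K * L) := by
          refine hdet.trans ?_
          gcongr
          · exact pow_nonneg (by positivity [one_le_zpowBound w y e]) _
          · exact_mod_cast Nat.factorial_le_pow (K * L)
      _ = _ := by rw [← zpowBound_pow, mul_pow, mul_pow, pow_mul]; ring
  · have hdet := abv_det_le_of_isNonarchimedean (isNonarchimedean w hw)
      (pow_nonneg (zero_le_one.trans (one_le_zpowBound w y e)) _)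
      (abv_interpMatrix_le_of_isNonarchimedean (isNonarchimedean w hw) J (hθ w))
    rwa [hcard, ← pow_mul, zpowBound_pow] at hdet
  · rw [log_pow, log_mul (by positivity) (by positivity), log_pow]
    simp only [Pi.smul_apply, smul_eq_mul, Nat.cast_mul, Finset.mul_sum, mul_add]
    congr 1
    · ring
    · exact Finset.sum_congr rfl fun i _ ↦ by ring

lemma sum_sub_sum_fst_eq (hK : 1 ≤ K) (hL : 1 ≤ L) :
    ((∑ i ∈ Finset.range (K * L), i : ℕ) : ℝ) - (∑ r : Fin K × Fin L, (r.1 : ℕ) : ℕ) =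
      K * L * ((K * L - K) / 2) := by
  have hrange (n : ℕ) (hn : 1 ≤ n) : ((∑ i ∈ Finset.range n, i : ℕ) : ℝ) = n * (n - 1) / 2 := by
    rw [eq_div_iff two_ne_zero, ← Nat.cast_two, ← Nat.cast_mul, Finset.sum_range_id_mul_two,
      Nat.cast_mul, Nat.cast_pred hn]
  have hfst : ∑ r : Fin K × Fin L, (r.1 : ℕ) = L * ∑ i ∈ Finset.range K, i := by
    rw [Fintype.sum_prod_type, ← Fin.sum_univ_eq_sum_range, Finset.mul_sum]
    simp
  rw [hfst, Nat.cast_mul, hrange K hK, hrange _ (Nat.mul_pos hK hL)]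
  push_cast
  ring

lemma le_logHeight₁_det_interpMatrix (hv : v ∈ nonarchAbsVal (K := F)) (hK : 1 ≤ K) (hL : 1 ≤ L)
    {Λ ω : F} (hΛ : v (Λ - 1) ≤ (1 / 2) ^ (K * L)) (hω : v (ω - 1) ≤ 1 / 2)
    {g J : Fin K × Fin L → ℕ} (hdet : (interpMatrix K L J fun c ↦ Λ ^ g c * ω ^ J c).det ≠ 0) :
    K * L * ((K * L - K) / 2 * log 2) ≤
      logHeight₁ (interpMatrix K L J fun c ↦ Λ ^ g c * ω ^ J c).det := by
  have hsmall := abv_det_interpMatrix_le (isNonarchimedean v hv) hΛ hω g J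
  set Δ := (interpMatrix K L J fun c ↦ Λ ^ g c * ω ^ J c).det
  have hH : 0 < mulHeight₁ Δ := mulHeight₁_pos _
  have hle : (1 / 2 : ℝ) ^ (∑ r : Fin K × Fin L, (r.1 : ℕ)) ≤
      mulHeight₁ Δ * (1 / 2) ^ ∑ i ∈ Finset.range (K * L), i := by
    refine (le_mul_of_one_le_left (by positivity) (one_le_mulHeight₁_mul_abv hv hdet)).trans ?_
    rw [mul_assoc]
    gcongr
  have hlog := log_le_log (by positivity) hle
  rw [log_mul hH.ne' (by positivity), log_pow, log_pow, one_div, log_inv,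
    ← logHeight₁_eq_log_mulHeight₁] at hlog
  rw [← mul_assoc, ← sum_sub_sum_fst_eq hK hL]
  linarith

/-- Both sides bound, up to the factor `K * L`, the height of a nonvanishing interpolation
determinant. -/
lemma le_of_abv_sub_one_le_pow [CharZero F] (hv : v ∈ nonarchAbsVal (K := F)) {I A T : ℕ}
    (hK : 1 ≤ K) (hL : 1 ≤ L) (hT : 1 ≤ T) {Λ ω : Fˣ}
    (hΛ : v ((Λ : F) - 1) ≤ (1 / 2) ^ (K * L)) (hω : v ((ω : F) - 1) ≤ 1 / 2)
    (hωinj : Function.Injective fun l : Fin L ↦ ω ^ (l : ℕ)) {j : ℕ → ℕ}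
    (hj : Function.Injective fun p : Fin I × Fin A ↦ j p.1 + p.2) (hKL : K * L ≤ I * A)
    (hJ : ∀ i < I, ∀ a < A + L, j i + a ≤ T * K)
    (hy : ∀ i < I, ∀ a < A + L, ∃ m : ι → ℤ, (∀ x, |m x| ≤ e x) ∧
      Λ ^ i * ω ^ (j i + a) = ∏ x, y x ^ m x) :
    (K * L - K) / 2 * log 2 ≤ totalWeight F * (log (K * L) + K * log (3 * T)) +
      2 * L * ∑ x, e x * logHeight₁ (y x : F) := by
  have hωinj' : Function.Injective fun l : Fin L ↦ (ω : F) ^ (l : ℕ) := fun l l' h ↦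
    hωinj (Units.ext (by simpa using h))
  obtain ⟨f, hf⟩ := exists_det_interpMatrix_ne_zero Λ.ne_zero ω.ne_zero hωinj' hj hKL
  have hlower := le_logHeight₁_det_interpMatrix hv hK hL hΛ hω hf
  have hupper := logHeight₁_det_interpMatrix_le (y := y) (e := e) hK hL hT
    (fun c ↦ hJ _ (f c).1.2 _ (f c).2.2)
    (θ := fun c ↦ (Λ : F) ^ ((f c).1 : ℕ) * (ω : F) ^ (j (f c).1 + (f c).2)) fun w c ↦ by
      obtain ⟨m, hm, heq⟩ := hy _ (f c).1.2 _ (f c).2.2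
      have := abv_prod_zpow_le w y hm
      rwa [← heq, Units.val_mul, Units.val_pow_eq_pow_val, Units.val_pow_eq_pow_val] at this
  have hKL0 : (0 : ℝ) < K * L := by exact_mod_cast Nat.mul_pos hK hL
  exact le_of_mul_le_mul_left (hlower.trans hupper) hKL0

end InterpolationBounds

/-! ### Simultaneous approximation and the choice of parameters -/

section SimultaneousApproximation

variable {ι : Type*} [Fintype ι]

lemma exists_abs_mul_sub_intCast_mul_lt_one (ξ : ι → ℝ) {Q : ℕ} (hQ : 0 < Q) :
    ∃ q : ℕ, 0 < q ∧ q ≤ Q ^ Fintype.card ι ∧ ∃ p : ι → ℤ, ∀ t, |q * ξ t - p t| * Q < 1 := by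
  classical
  have hQ' : (0 : ℝ) < Q := Nat.cast_pos.2 hQ
  have hbox (m : ℕ) (t : ι) : ⌊Q * Int.fract (m * ξ t)⌋₊ < Q :=
    (Nat.floor_lt (by positivity)).2 (mul_lt_of_lt_one_right hQ' (Int.fract_lt_one _))
  obtain ⟨m, hm, m', hm', hne, heq⟩ := Finset.exists_ne_map_eq_of_card_lt_of_maps_to
    (s := Finset.range (Q ^ Fintype.card ι + 1)) (t := (Finset.univ : Finset (ι → Fin Q)))
    (by simp) (f := fun m t ↦ ⟨_, hbox m t⟩) fun _ _ ↦ Finset.mem_univ _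
  wlog hlt : m < m' generalizing m m'
  · exact this m' hm' m hm hne.symm heq.symm (by omega)
  rw [Finset.mem_range] at hm'
  refine ⟨m' - m, by omega, by omega, fun t ↦ ⌊m' * ξ t⌋ - ⌊m * ξ t⌋, fun t ↦ ?_⟩
  have hfloor : ⌊Q * Int.fract (m' * ξ t)⌋ = ⌊Q * Int.fract (m * ξ t)⌋ := by
    rw [← Int.natCast_floor_eq_floor (by positivity), ← Int.natCast_floor_eq_floor (by positivity),
      Nat.cast_inj]
    simpa using (congrFun heq t).symm
  refine Eq.trans_lt ?_ (Int.abs_sub_lt_one_of_floor_eq_floor hfloor)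
  rw [← abs_of_pos hQ', ← abs_mul, abs_of_pos hQ', Int.fract, Int.fract, Nat.cast_sub hlt.le]
  push_cast
  ring_nf

lemma exists_abs_mul_sub_mul_mul_le (b : ι → ℤ) {n Q : ℕ} (hn : 0 < n) (hQ : 0 < Q)
    (hb : ∀ t, |b t| ≤ n) :
    ∃ q : ℕ, 0 < q ∧ q ≤ Q ^ Fintype.card ι ∧
      ∃ p : ι → ℤ, ∀ t, |p t| ≤ q ∧ |q * b t - n * p t| * Q ≤ n := by
  have hn' : (0 : ℝ) < n := Nat.cast_pos.2 hn
  obtain ⟨q, hq, hqQ, p, hp⟩ := exists_abs_mul_sub_intCast_mul_lt_one (fun t ↦ (b t / n : ℝ)) hQ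
  refine ⟨q, hq, hqQ, p, fun t ↦ ⟨?_, ?_⟩⟩
  · have hone : |q * (b t / n : ℝ) - p t| < 1 :=
      (le_mul_of_one_le_right (abs_nonneg _) (Nat.one_le_cast.2 hQ)).trans_lt (hp t)
    have hle : |q * (b t / n : ℝ)| ≤ q := by
      rw [abs_mul, abs_div, Nat.abs_cast, Nat.abs_cast]
      refine mul_le_of_le_one_right q.cast_nonneg (div_le_one_of_le₀ ?_ hn'.le)
      exact_mod_cast hb t
    have hlt : |(p t : ℝ)| < q + 1 := by
      rw [abs_sub_comm] at hone
      linarith [abs_sub_abs_le_abs_sub (p t : ℝ) (q * (b t / n))]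
    exact Int.lt_add_one_iff.1 (by exact_mod_cast hlt)
  · have hcast : ((|q * b t - n * p t| * Q : ℤ) : ℝ) = n * (|q * (b t / n : ℝ) - p t| * Q) := by
      rw [← mul_assoc, ← abs_of_pos hn', ← abs_mul, abs_of_pos hn']
      push_cast
      congr 2
      field_simp
    have hlt : ((|q * b t - n * p t| * Q : ℤ) : ℝ) ≤ n := by
      rw [hcast]
      exact mul_le_of_le_one_right hn'.le (hp t).le
    exact_mod_cast hlt

lemma mul_prod_zpow_pow_mul_inv_pow {G : Type*} [CommGroup G] (γ : G) (g : ι → G) (b p : ι → ℤ)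
    (n q i J : ℕ) :
    (γ ^ n * ∏ t, g t ^ b t) ^ i * ((γ ^ q * ∏ t, g t ^ p t)⁻¹) ^ J =
      γ ^ (n * i - q * J : ℤ) * ∏ t, g t ^ (b t * i - p t * J) := by
  simp only [zpow_sub, zpow_mul, zpow_natCast, mul_pow, inv_pow, Finset.prod_mul_distrib,
    Finset.prod_inv_distrib, Finset.prod_pow, mul_inv]
  ac_rfl

end SimultaneousApproximation

section Parameters

variable {n q A : ℕ}

lemma abs_mul_sub_mul_div_add_le {a : ℕ} (hq : 0 < q) (ha : a < 2 * A) (i : ℕ) :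
    |(n * i - q * (n * i / q + a : ℕ) : ℤ)| ≤ (2 * q * A : ℕ) := by
  have hdiv := Nat.div_add_mod (n * i) q
  have hmod := Nat.mod_lt (n * i) hq
  have hqa : q * (a + 1) ≤ q * (2 * A) := Nat.mul_le_mul_left _ ha
  have hle : q * (n * i / q + a) ≤ n * i + 2 * q * A := by
    linarith [Nat.zero_le (n * i % q)]
  have hge : n * i ≤ q * (n * i / q + a) + 2 * q * A := by linarith [Nat.zero_le (q * a)]
  zify at hle hge
  rw [abs_le]
  push_cast
  constructor <;> linarith

lemma abs_mul_sub_mul_le {Q H i J : ℕ} {b p : ℤ} (hQq : 0 < Q * q) (hH : 1 ≤ H) (hp : |p| ≤ q)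
    (hbp : |q * b - n * p| * Q ≤ n) (hi : n * i ≤ q * H * (Q * q * A))
    (hJ : |(n * i - q * J : ℤ)| ≤ (2 * q * A : ℕ)) :
    |b * i - p * J| ≤ (3 * H * q * A : ℕ) := by
  have hQq' : (0 : ℤ) < Q * q := by exact_mod_cast hQq
  have hH' : (1 : ℤ) ≤ H := by exact_mod_cast hH
  refine le_of_mul_le_mul_left ?_ hQq'
  calc (Q * q : ℤ) * |b * i - p * J|
      = |(q * b - n * p) * Q * i + Q * p * (n * i - q * J)| := by
        rw [← abs_of_pos hQq', ← abs_mul]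
        congr 1
        ring
    _ ≤ |q * b - n * p| * Q * i + Q * |p| * |(n * i - q * J : ℤ)| := by
        refine (abs_add_le _ _).trans_eq ?_
        simp only [abs_mul, Nat.abs_cast]
    _ ≤ n * i + Q * q * (2 * q * A : ℕ) := by gcongr
    _ ≤ q * H * (Q * q * A) + Q * q * (2 * q * A : ℕ) * H := by
        refine add_le_add (by exact_mod_cast hi) (le_mul_of_one_le_right (by positivity) hH')
    _ = Q * q * (3 * H * q * A : ℕ) := by push_cast; ring

lemma injective_mul_div_add {I : ℕ} (hq : 0 < q) (hA : A * q ≤ n) :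
    Function.Injective fun x : Fin I × Fin A ↦ n * x.1 / q + (x.2 : ℕ) := by
  have hgap {i i' : ℕ} (hi : i < i') : n * i / q + A ≤ n * i' / q := by
    rw [← Nat.add_mul_div_right _ _ hq]
    refine Nat.div_le_div_right ?_
    calc n * i + A * q ≤ n * (i + 1) := by linarith
      _ ≤ n * i' := Nat.mul_le_mul_left _ hi
  rintro ⟨i, a⟩ ⟨i', a'⟩ h
  dsimp only at h
  rcases lt_trichotomy i i' with hi | rfl | hi
  · have := hgap hi
    omega
  · exact Prod.ext rfl (Fin.ext (by simpa using h))
  · have := hgap hi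
    omega

/-- The parameter `A` is `c * L * n / (L ^ 3 * q)`, rounded up. -/
lemma exists_le_mul_and_mul_le {c L : ℕ} (hc : 0 < c) (hL : 0 < L) (hcL : 2 * c ≤ L ^ 2)
    (hq : 0 < q) (hn : L ^ 3 * q ≤ n) :
    ∃ A, L ≤ A ∧ A * q ≤ n ∧ c * L * n ≤ L ^ 3 * q * A ∧ L ^ 3 * q * A ≤ 2 * (c * L * n) := by
  have hQq : 0 < L ^ 3 * q := by positivity
  have hlower : c * L * n < L ^ 3 * q * (c * L * n / (L ^ 3 * q) + 1) := Nat.lt_mul_div_succ _ hQq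
  have hncL : n ≤ c * L * n := Nat.le_mul_of_pos_left _ (Nat.mul_pos hc hL)
  have hupper : L ^ 3 * q * (c * L * n / (L ^ 3 * q) + 1) ≤ 2 * (c * L * n) := by
    linarith [Nat.mul_div_le (c * L * n) (L ^ 3 * q)]
  refine ⟨c * L * n / (L ^ 3 * q) + 1, ?_, ?_, hlower.le, hupper⟩
  · refine le_of_mul_le_mul_left (hlower.le.trans' ?_) hQq
    calc L ^ 3 * q * L ≤ n * L := Nat.mul_le_mul_right _ hn
      _ ≤ c * (n * L) := Nat.le_mul_of_pos_left _ hc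
      _ = c * L * n := by ring
  · refine le_of_mul_le_mul_left (a := L ^ 3) ?_ (by positivity)
    calc L ^ 3 * ((c * L * n / (L ^ 3 * q) + 1) * q) ≤ 2 * (c * L * n) := by linarith
      _ = 2 * c * (L * n) := by ring
      _ ≤ L ^ 2 * (L * n) := Nat.mul_le_mul_right _ hcL
      _ = L ^ 3 * n := by ring

lemma mul_div_add_le_mul {c Q H I i a : ℕ} (hc : 2 ≤ c) (hQ : 2 ≤ Q) (hH : 1 ≤ H) (hq : 0 < q)
    (hI : n * I ≤ q * H * (Q * q * A)) (hi : i < I) (ha : a < 2 * A) :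
    n * i / q + a ≤ Q * (c * q * H * A) := by
  have hdiv : n * i / q ≤ H * (Q * q * A) := by
    refine Nat.div_le_of_le_mul ?_
    calc n * i ≤ n * I := Nat.mul_le_mul_left _ hi.le
      _ ≤ q * (H * (Q * q * A)) := by rwa [← mul_assoc]
  have hA : 2 * A ≤ H * (Q * q * A) :=
    calc 2 * A ≤ Q * A := Nat.mul_le_mul_right _ hQ
      _ ≤ Q * A * (H * q) := Nat.le_mul_of_pos_right _ (Nat.mul_pos hH hq)
      _ = H * (Q * q * A) := by ring
  calc n * i / q + a ≤ 2 * (H * (Q * q * A)) := by omega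
    _ ≤ c * (H * (Q * q * A)) := Nat.mul_le_mul_right _ hc
    _ = Q * (c * q * H * A) := by ring

end Parameters

section Numerics

open Real Filter

lemma add_lt_mul_log_two {D K L S : ℝ} (hD : 0 ≤ D) (hK : 1 ≤ K) (hL : 1 ≤ L)
    (hS : 2 * S ≤ K / 40) (h : D * (1 + log 3 + 4 * log L) + L / 40 < 3 / 10 * (L - 1)) :
    D * (log (K * L) + K * log (3 * L ^ 3)) + 2 * L * S < (K * L - K) / 2 * log 2 := by
  have hlogL : 0 ≤ log L := log_nonneg hL
  have hlogK : log K ≤ K := (log_le_sub_one_of_pos (by linarith)).trans (by linarith)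
  have hlogKL : log (K * L) ≤ K + K * log L := by
    rw [log_mul (by linarith) (by linarith)]
    linarith [le_mul_of_one_le_left hlogL hK]
  have hlogQ : log (3 * L ^ 3) = log 3 + 3 * log L := by
    rw [log_mul (by norm_num) (by positivity), log_pow]
    norm_num
  have hlog2 : 6 / 10 ≤ log 2 := by linarith [log_two_gt_d9]
  calc D * (log (K * L) + K * log (3 * L ^ 3)) + 2 * L * S
      ≤ D * (K + K * log L + K * (log 3 + 3 * log L)) + L * (K / 40) := by
        rw [hlogQ, mul_comm 2 L, mul_assoc]
        gcongr
    _ = K * (D * (1 + log 3 + 4 * log L) + L / 40) := by ring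
    _ < K * (3 / 10 * (L - 1)) := by gcongr
    _ = (K * L - K) / 2 * (6 / 10) := by ring
    _ ≤ (K * L - K) / 2 * log 2 := by
        gcongr
        nlinarith

lemma exists_nat_mul_log_add_lt (D c : ℕ) (B : ℝ) :
    ∃ L : ℕ, 2 ≤ L ∧ 2 * c ≤ L ^ 2 ∧ B ≤ L ∧
      D * (1 + log 3 + 4 * log L) + L / 40 < 3 / 10 * ((L : ℝ) - 1) := by
  have hlog : ∀ᶠ L : ℕ in atTop, log L ≤ 1 / (40 * (D + 1)) * L := by
    filter_upwards [(isLittleO_log_id_atTop.comp_tendsto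
      (tendsto_natCast_atTop_atTop (R := ℝ))).def (c := 1 / (40 * (D + 1))) (by positivity)]
      with L hL
    simp only [Function.comp_apply, id_eq, norm_eq_abs, Nat.abs_cast] at hL
    exact (le_abs_self _).trans hL
  have hcast : Tendsto (Nat.cast : ℕ → ℝ) atTop atTop := tendsto_natCast_atTop_atTop
  obtain ⟨L, hlogL, hL2, hLc, hLB, hLD⟩ := (hlog.and <| (eventually_ge_atTop 2).and <|
    (eventually_ge_atTop (2 * c)).and <| (hcast.eventually_ge_atTop B).and <|
    hcast.eventually_ge_atTop (40 * (D * (1 + log 3) + 1))).exists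
  refine ⟨L, hL2, hLc.trans (Nat.le_self_pow two_ne_zero L), hLB, ?_⟩
  have hDlog : D * log L ≤ L / 40 :=
    calc D * log L ≤ (D + 1) * (1 / (40 * (D + 1)) * L) := by gcongr; linarith
      _ = L / 40 := by field_simp
  linarith

end Numerics

/-! ### Linear forms in logarithms at a nonarchimedean place -/

section LinearForms

open Height AdmissibleAbsValues Real

variable {F : Type*} [Field F] [AdmissibleAbsValues F] {v : AbsoluteValue F ℝ}

lemma logHeight₁_eq_zero_of_pow_eq_one {x : F} {k : ℕ} (hk : 0 < k) (h : x ^ k = 1) :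
    logHeight₁ x = 0 := by
  have hpow := logHeight₁_pow x k
  rw [h, logHeight₁_one, eq_comm, mul_eq_zero] at hpow
  exact hpow.resolve_left (Nat.cast_ne_zero.2 hk.ne')

lemma mul_log_two_le_of_abv_sub_one_le (hv : v ∈ nonarchAbsVal (K := F)) {x : F} (hx : x ≠ 1)
    {M : ℕ} (hM : v (x - 1) ≤ (1 / 2) ^ M) :
    M * log 2 ≤ totalWeight F * log 2 + logHeight₁ x := by
  have hone : 1 ≤ mulHeight₁ (x - 1) * (1 / 2) ^ M :=
    (one_le_mulHeight₁_mul_abv hv (sub_ne_zero.2 hx)).trans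
      (mul_le_mul_of_nonneg_left hM (mulHeight₁_pos _).le)
  have hlog := log_le_log one_pos hone
  rw [log_one, log_mul (mulHeight₁_pos _).ne' (by positivity), log_pow,
    ← logHeight₁_eq_log_mulHeight₁, one_div, log_inv] at hlog
  have hsub := logHeight₁_sub_le x 1
  rw [logHeight₁_one] at hsub
  linarith

variable {ι : Type*} [Fintype ι] {g : ι → Fˣ} {γ : Fˣ} {b p : ι → ℤ} {h₀ c H L n q : ℕ}

lemma two_mul_sum_option_mul_logHeight₁_le {A : ℕ} (hh₀ : ∑ t, logHeight₁ (g t : F) ≤ h₀)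
    (hH : logHeight₁ (γ : F) ≤ H) (hc : 40 * (4 + 6 * h₀) ≤ c) :
    2 * ∑ x : Option ι, ((x.elim (2 * q * A) fun _ ↦ 3 * H * q * A : ℕ) : ℝ) *
      logHeight₁ ((x.elim γ g : Fˣ) : F) ≤ (c * q * H * A : ℕ) / 40 := by
  have hc' : (40 * (4 + 6 * h₀) : ℝ) ≤ c := by exact_mod_cast hc
  rw [Fintype.sum_option]
  simp only [Option.elim_none, Option.elim_some, Nat.cast_mul, Nat.cast_ofNat, ← Finset.mul_sum]
  calc 2 * (2 * q * A * logHeight₁ (γ : F) + 3 * H * q * A * ∑ t, logHeight₁ (g t : F))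
      ≤ 2 * (2 * q * A * H + 3 * H * q * A * h₀) := by gcongr
    _ = 40 * (4 + 6 * h₀) * (q * H * A) / 40 := by ring
    _ ≤ c * (q * H * A) / 40 := by gcongr
    _ = c * q * H * A / 40 := by ring

lemma lt_abv_sub_one_of_injective [CharZero F] (hv : v ∈ nonarchAbsVal (K := F)) {A : ℕ}
    (hg : ∀ t, g t ∈ unitsNearOne (isNonarchimedean v hv))
    (hγ : γ ∈ unitsNearOne (isNonarchimedean v hv))
    (hh₀ : ∑ t, logHeight₁ (g t : F) ≤ h₀) (hH : logHeight₁ (γ : F) ≤ H) (hH1 : 1 ≤ H)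
    (hc : 40 * (4 + 6 * h₀) ≤ c) (hL : 2 ≤ L)
    (hLD : totalWeight F * (1 + log 3 + 4 * log L) + L / 40 < 3 / 10 * ((L : ℝ) - 1)) (hq : 0 < q)
    (hp : ∀ t, |p t| ≤ q ∧ |q * b t - n * p t| * (L ^ 3 : ℕ) ≤ n) (hLA : L ≤ A) (hAq : A * q ≤ n)
    (hA : c * L * n ≤ L ^ 3 * q * A)
    (hinj : Function.Injective fun l : Fin L ↦ (γ ^ q * ∏ t, g t ^ p t) ^ (l : ℕ)) :
    (1 / 2) ^ (c * q * H * A * L) < v ((γ ^ n * ∏ t, g t ^ b t : Fˣ) - 1) := by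
  by_contra! hΛ
  have hc2 : 2 ≤ c := by omega
  have hA0 : 0 < A := by omega
  have hL3 : 2 ≤ L ^ 3 := hL.trans (Nat.le_self_pow three_ne_zero L)
  have hK : 1 ≤ c * q * H * A := Nat.mul_pos (by positivity) hA0
  have hI : n * (c * q * H * L) ≤ q * H * (L ^ 3 * q * A) := by
    calc n * (c * q * H * L) = q * H * (c * L * n) := by ring
      _ ≤ _ := Nat.mul_le_mul_left _ hA
  have hω : (γ ^ q * ∏ t, g t ^ p t)⁻¹ ∈ unitsNearOne (isNonarchimedean v hv) :=
    inv_mem (mul_mem (pow_mem hγ _) (prod_mem fun t _ ↦ zpow_mem (hg t) _))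
  refine (le_of_abv_sub_one_le_pow (y := fun x : Option ι ↦ x.elim γ g)
    (e := fun x ↦ x.elim (2 * q * A) fun _ ↦ 3 * H * q * A) (I := c * q * H * L) (A := A)
    (T := L ^ 3) (j := fun i ↦ n * i / q) hv hK (by omega) (by omega) hΛ hω ?_
    (injective_mul_div_add hq hAq) (by apply le_of_eq; ring) ?_ ?_).not_gt ?_
  · simpa only [inv_pow, Function.comp_def] using inv_injective.comp hinj
  · exact fun i hi a ha ↦ mul_div_add_le_mul hc2 hL3 hH1 hq hI hi (by omega)
  · intro i hi a ha
    have hJ := abs_mul_sub_mul_div_add_le (n := n) (A := A) (a := a) hq (by omega) i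
    refine ⟨fun x ↦ x.elim (n * i - q * (n * i / q + a : ℕ))
      fun t ↦ b t * i - p t * (n * i / q + a : ℕ), ?_, ?_⟩
    · rintro (_ | t)
      · exact hJ
      · exact abs_mul_sub_mul_le (by positivity) hH1 (hp t).1 (hp t).2
          ((Nat.mul_le_mul_left _ hi.le).trans hI) hJ
    · rw [mul_prod_zpow_pow_mul_inv_pow, Fintype.prod_option]
      rfl
  · have := add_lt_mul_log_two (totalWeight F).cast_nonneg (Nat.one_le_cast.2 hK)
      (Nat.one_le_cast.2 (by omega)) (two_mul_sum_option_mul_logHeight₁_le hh₀ hH hc) hLD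
    rw [Nat.cast_pow]
    linarith

lemma mul_le_of_injective [CharZero F] (hv : v ∈ nonarchAbsVal (K := F))
    (hg : ∀ t, g t ∈ unitsNearOne (isNonarchimedean v hv))
    (hγ : γ ∈ unitsNearOne (isNonarchimedean v hv))
    (hh₀ : ∑ t, logHeight₁ (g t : F) ≤ h₀) (hH : logHeight₁ (γ : F) ≤ H) (hH1 : 1 ≤ H)
    (hc : 40 * (4 + 6 * h₀) ≤ c) (hL : 2 ≤ L) (hcL : 2 * c ≤ L ^ 2)
    (hLD : totalWeight F * (1 + log 3 + 4 * log L) + L / 40 < 3 / 10 * ((L : ℝ) - 1)) (hq : 0 < q)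
    (hn : L ^ 3 * q ≤ n) (hp : ∀ t, |p t| ≤ q ∧ |q * b t - n * p t| * (L ^ 3 : ℕ) ≤ n)
    (hinj : Function.Injective fun l : Fin L ↦ (γ ^ q * ∏ t, g t ^ p t) ^ (l : ℕ)) {M : ℕ}
    (hM : v ((γ ^ n * ∏ t, g t ^ b t : Fˣ) - 1) ≤ (1 / 2) ^ M) :
    M * L ≤ 2 * c ^ 2 * H * n := by
  obtain ⟨A, hLA, hAq, hA, hA'⟩ := exists_le_mul_and_mul_le (by omega) (by omega) hcL hq hn
  have hMK : M ≤ c * q * H * A * L := by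
    refine le_of_lt ((pow_lt_pow_iff_right_of_lt_one₀ one_half_pos (one_half_lt_one (α := ℝ))).1 ?_)
    exact (lt_abv_sub_one_of_injective hv hg hγ hh₀ hH hH1 hc hL hLD hq hp hLA hAq hA
      hinj).trans_le hM
  refine le_of_mul_le_mul_left (a := L ^ 3) ?_ (by positivity)
  calc L ^ 3 * (M * L) ≤ L ^ 3 * (c * q * H * A * L * L) := by gcongr
    _ = c * H * L * L * (L ^ 3 * q * A) := by ring
    _ ≤ c * H * L * L * (2 * (c * L * n)) := by gcongr
    _ = L ^ 3 * (2 * c ^ 2 * H * n) := by ring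

lemma logHeight₁_mul_le_of_pow_eq_one (hh₀ : ∑ t, logHeight₁ (g t : F) ≤ h₀) {m : ℕ} (hq : 0 < q)
    (hm : 0 < m) (hmL : m ≤ L) (hp : ∀ t, |q * b t - n * p t| * (L ^ 3 : ℕ) ≤ n)
    (hα : (γ ^ q * ∏ t, g t ^ p t) ^ m = 1) :
    logHeight₁ ((γ ^ n * ∏ t, g t ^ b t : Fˣ) : F) * L ≤ h₀ * n := by
  have hpow : (γ ^ n * ∏ t, g t ^ b t) ^ (q * m) = ∏ t, g t ^ ((q * b t - n * p t) * m) := by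
    have hid := mul_prod_zpow_pow_mul_inv_pow γ g b p n q (q * m) (n * m)
    rw [mul_comm n m, pow_mul _ m n, inv_pow, hα, inv_one, one_pow, mul_one] at hid
    rw [hid]
    push_cast
    rw [show (n * (q * m) - q * (m * n) : ℤ) = 0 by ring, zpow_zero, one_mul]
    exact Finset.prod_congr rfl fun t _ ↦ by ring_nf
  have hterm (t : ι) : logHeight₁ ((g t ^ ((q * b t - n * p t) * m) : Fˣ) : F) * L ≤
      n * logHeight₁ (g t : F) := by
    rw [Units.val_zpow_eq_zpow_val, logHeight₁_zpow, mul_right_comm]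
    refine mul_le_mul_of_nonneg_right ?_ (zero_le_logHeight₁ _)
    have hpt := hp t
    rw [Int.abs_eq_natAbs] at hpt
    rw [Int.natAbs_mul, Int.natAbs_natCast]
    generalize (q * b t - n * p t).natAbs = d at *
    norm_cast at hpt ⊢
    calc d * m * L ≤ d * L * L := by gcongr
      _ ≤ d * L * L * L := Nat.le_mul_of_pos_right _ (by omega)
      _ = d * L ^ 3 := by ring
      _ ≤ n := hpt
  calc logHeight₁ ((γ ^ n * ∏ t, g t ^ b t : Fˣ) : F) * L
      ≤ (q * m : ℕ) * logHeight₁ ((γ ^ n * ∏ t, g t ^ b t : Fˣ) : F) * L := by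
        gcongr
        exact le_mul_of_one_le_left (zero_le_logHeight₁ _) (Nat.one_le_cast.2 (Nat.mul_pos hq hm))
    _ = logHeight₁ (∏ t, ((g t ^ ((q * b t - n * p t) * m) : Fˣ) : F)) * L := by
        rw [← logHeight₁_pow, ← Units.val_pow_eq_pow_val, hpow, Units.coe_prod]
    _ ≤ ∑ t, logHeight₁ ((g t ^ ((q * b t - n * p t) * m) : Fˣ) : F) * L := by
        rw [← Finset.sum_mul]
        gcongr
        exact logHeight₁_prod_le _ _
    _ ≤ ∑ t, n * logHeight₁ (g t : F) := Finset.sum_le_sum fun t _ ↦ hterm t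
    _ ≤ h₀ * n := by
        rw [← Finset.mul_sum, mul_comm]
        gcongr

lemma mul_le_of_pow_eq_one (hv : v ∈ nonarchAbsVal (K := F))
    (hh₀ : ∑ t, logHeight₁ (g t : F) ≤ h₀) {m : ℕ} (hq : 0 < q) (hm : 0 < m) (hmL : m ≤ L)
    (hn : totalWeight F * L ≤ n) (hp : ∀ t, |q * b t - n * p t| * (L ^ 3 : ℕ) ≤ n)
    (hα : (γ ^ q * ∏ t, g t ^ p t) ^ m = 1) (hΛ : γ ^ n * ∏ t, g t ^ b t ≠ 1) {M : ℕ}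
    (hM : v ((γ ^ n * ∏ t, g t ^ b t : Fˣ) - 1) ≤ (1 / 2) ^ M) :
    M * L ≤ (1 + 2 * h₀) * n := by
  have hheight := logHeight₁_mul_le_of_pow_eq_one hh₀ hq hm hmL hp hα
  have hliou := mul_log_two_le_of_abv_sub_one_le hv (Units.val_eq_one.not.2 hΛ) hM
  have hn' : (totalWeight F * L : ℝ) ≤ n := by exact_mod_cast hn
  have hlog2 : 1 / 2 ≤ log 2 := by linarith [log_two_gt_d9]
  suffices h : (M * L : ℝ) * log 2 ≤ ((1 + 2 * h₀) * n) * log 2 by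
    exact_mod_cast le_of_mul_le_mul_right h (by linarith)
  calc (M * L : ℝ) * log 2 = M * log 2 * L := by ring
    _ ≤ (totalWeight F * log 2 + logHeight₁ ((γ ^ n * ∏ t, g t ^ b t : Fˣ) : F)) * L := by gcongr
    _ = totalWeight F * L * log 2 + logHeight₁ ((γ ^ n * ∏ t, g t ^ b t : Fˣ) : F) * L := by ring
    _ ≤ n * log 2 + h₀ * n := by gcongr
    _ = n * log 2 + 2 * (h₀ * n) * (1 / 2) := by ring
    _ ≤ n * log 2 + 2 * (h₀ * n) * log 2 := by gcongr
    _ = (1 + 2 * h₀) * n * log 2 := by ring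

end LinearForms

section FinitelyGenerated

open Height AdmissibleAbsValues Real

variable {F : Type*} [Field F] [AdmissibleAbsValues F] {v : AbsoluteValue F ℝ}

lemma exists_forall_le_mul_of_abs_le [CharZero F] (hv : v ∈ nonarchAbsVal (K := F)) {ι : Type*}
    [Fintype ι] {g : ι → Fˣ} (hg : ∀ t, g t ∈ unitsNearOne (isNonarchimedean v hv)) {ε : ℝ}
    (hε : 0 < ε) :
    ∃ n₀ : ℕ, 0 < n₀ ∧ ∀ n ≥ n₀, ∀ b : ι → ℤ, (∀ t, |b t| ≤ n) →
      ∀ γ ∈ unitsNearOne (isNonarchimedean v hv), γ ^ n * ∏ t, g t ^ b t ≠ 1 →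
      ∀ M : ℕ, v ((γ ^ n * ∏ t, g t ^ b t : Fˣ) - 1) ≤ (1 / 2) ^ M →
        M ≤ ε * n * (logHeight₁ (γ : F) + 1) := by
  obtain ⟨h₀, hh₀⟩ := exists_nat_ge (∑ t, logHeight₁ (g t : F))
  obtain ⟨c, hc⟩ : ∃ c, c = 40 * (4 + 6 * h₀) := ⟨_, rfl⟩
  obtain ⟨L, hL, hcL, hLε, hLD⟩ := exists_nat_mul_log_add_lt (totalWeight F) c (2 * c ^ 2 / ε)
  have hQ : 0 < L ^ 3 * (L ^ 3) ^ Fintype.card ι := by positivity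
  refine ⟨L ^ 3 * (L ^ 3) ^ Fintype.card ι + totalWeight F * L, by omega,
    fun n hn b hb γ hγ hΛ M hM ↦ ?_⟩
  obtain ⟨q, hq, hqQ, p, hp⟩ :=
    exists_abs_mul_sub_mul_mul_le b (n := n) (Q := L ^ 3) (by omega) (by positivity) hb
  obtain ⟨H, hH⟩ : ∃ H, H = ⌊logHeight₁ (γ : F)⌋₊ + 1 := ⟨_, rfl⟩
  have hγH : logHeight₁ (γ : F) ≤ H := by simpa [hH] using (Nat.lt_floor_add_one _).le
  have hHγ : (H : ℝ) ≤ logHeight₁ (γ : F) + 1 := by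
    simpa [hH] using Nat.floor_le (zero_le_logHeight₁ (γ : F))
  have hML : M * L ≤ 2 * c ^ 2 * H * n := by
    by_cases hinj : Function.Injective fun l : Fin L ↦ (γ ^ q * ∏ t, g t ^ p t) ^ (l : ℕ)
    · have hqn : L ^ 3 * q ≤ n :=
        (Nat.mul_le_mul_left _ hqQ).trans ((Nat.le_add_right _ _).trans hn)
      exact mul_le_of_injective hv hg hγ hh₀ hγH (by omega) hc.ge hL hcL hLD hq hqn hp hinj hM
    · obtain ⟨m, hm, hmL, hα⟩ : ∃ m, 0 < m ∧ m ≤ L ∧ (γ ^ q * ∏ t, g t ^ p t) ^ m = 1 := by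
        by_contra! hord
        refine hinj fun l l' h ↦ ?_
        wlog hlt : l < l' generalizing l l'
        · exact (not_lt.1 hlt).eq_or_lt.elim (·.symm) fun h' ↦ (this l' l h.symm h').symm
        dsimp only at h
        refine absurd ?_ (hord (l' - l) (by omega) (by omega))
        rw [pow_sub _ hlt.le, ← h, mul_inv_cancel]
      refine (mul_le_of_pow_eq_one hv hh₀ hq hm hmL (by omega) (fun t ↦ (hp t).2) hα hΛ hM).trans ?_
      gcongr
      rw [hH, hc]
      nlinarith
  rw [div_le_iff₀ hε] at hLε
  refine le_of_mul_le_mul_right ?_ (by positivity : (0 : ℝ) < L)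
  calc (M * L : ℝ) ≤ 2 * c ^ 2 * H * n := by exact_mod_cast hML
    _ ≤ L * ε * (logHeight₁ (γ : F) + 1) * n := by gcongr
    _ = ε * n * (logHeight₁ (γ : F) + 1) * L := by ring

lemma mul_logHeight₁_le_of_abs_le {ι : Type*} [Fintype ι] (g : ι → Fˣ) {b : ι → ℤ} {n : ℕ}
    (hb : ∀ t, |b t| ≤ n) (γ : Fˣ) :
    n * logHeight₁ (γ : F) ≤
      logHeight₁ ((γ ^ n * ∏ t, g t ^ b t : Fˣ) : F) + n * ∑ t, logHeight₁ (g t : F) := by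
  have hγ : (γ : F) ^ n = (γ ^ n * ∏ t, g t ^ b t : Fˣ) * ((∏ t, g t ^ b t : Fˣ) : F)⁻¹ := by
    rw [← Units.val_inv_eq_inv_val, ← Units.val_mul, mul_inv_cancel_right,
      Units.val_pow_eq_pow_val]
  rw [← logHeight₁_pow, hγ]
  refine (logHeight₁_mul_le _ _).trans (add_le_add_right ?_ _)
  rw [logHeight₁_inv, Units.coe_prod, Finset.mul_sum]
  refine (logHeight₁_prod_le _ _).trans (Finset.sum_le_sum fun t _ ↦ ?_)
  rw [Units.val_zpow_eq_zpow_val, logHeight₁_zpow]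
  refine mul_le_mul_of_nonneg_right ?_ (zero_le_logHeight₁ _)
  have hbt := hb t
  rw [Int.abs_eq_natAbs] at hbt
  exact_mod_cast hbt

lemma exists_forall_le_mul_logHeight₁_prod_zpow_add [CharZero F] (hv : v ∈ nonarchAbsVal (K := F))
    {ι : Type*} [Fintype ι] {g : ι → Fˣ} (hg : ∀ t, g t ∈ unitsNearOne (isNonarchimedean v hv))
    {ε : ℝ} (hε : 0 < ε) :
    ∃ n₀ : ℕ, ∀ n ≥ n₀, ∀ b : ι → ℤ,
      ∀ γ ∈ unitsNearOne (isNonarchimedean v hv), γ ^ n * ∏ t, g t ^ b t ≠ 1 →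
      ∀ M : ℕ, v ((γ ^ n * ∏ t, g t ^ b t : Fˣ) - 1) ≤ (1 / 2) ^ M →
        M ≤ ε * (logHeight₁ ((γ ^ n * ∏ t, g t ^ b t : Fˣ) : F) + n) := by
  set h₀ := ∑ t, logHeight₁ (g t : F)
  have hh₀ : 0 ≤ h₀ := Finset.sum_nonneg fun t _ ↦ zero_le_logHeight₁ _
  obtain ⟨n₀, hn₀, hbound⟩ := exists_forall_le_mul_of_abs_le hv hg
    (div_pos hε (by linarith : 0 < h₀ + 1))
  refine ⟨n₀, fun n hn b γ hγ hΛ M hM ↦ ?_⟩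
  have hn0 : (0 : ℤ) < n := by omega
  have hmod (t : ι) : |b t % n| ≤ n := by
    rw [abs_of_nonneg (Int.emod_nonneg _ hn0.ne')]
    exact (Int.emod_lt_of_pos _ hn0).le
  set γ' := γ * ∏ t, g t ^ (b t / n)
  have hγ' : γ' ∈ unitsNearOne (isNonarchimedean v hv) :=
    mul_mem hγ (prod_mem fun t _ ↦ zpow_mem (hg t) _)
  have hred : γ ^ n * ∏ t, g t ^ b t = γ' ^ n * ∏ t, g t ^ (b t % n) := by
    rw [mul_pow, mul_assoc, ← Finset.prod_pow, ← Finset.prod_mul_distrib]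
    congr 1
    refine Finset.prod_congr rfl fun t _ ↦ ?_
    rw [← zpow_natCast, ← zpow_mul, ← zpow_add, mul_comm, Int.mul_ediv_add_emod]
  rw [hred] at hΛ hM ⊢
  have hheight := mul_logHeight₁_le_of_abs_le g hmod γ'
  set X := logHeight₁ ((γ' ^ n * ∏ t, g t ^ (b t % n) : Fˣ) : F)
  have hX : 0 ≤ X := zero_le_logHeight₁ _
  calc (M : ℝ) ≤ ε / (h₀ + 1) * n * (logHeight₁ (γ' : F) + 1) := hbound n hn _ hmod γ' hγ' hΛ M hM
    _ = ε / (h₀ + 1) * (n * logHeight₁ (γ' : F) + n) := by ring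
    _ ≤ ε / (h₀ + 1) * ((h₀ + 1) * (X + n)) := by
      gcongr
      linarith [mul_nonneg hh₀ hX]
    _ = ε * (X + n) := by field_simp

variable [CharZero F] {k : ℕ} {Γ : Subgroup Fˣ} {ε : ℝ}

lemma exists_forall_le_mul_logHeight₁_pow_mul_add (hv : v ∈ nonarchAbsVal (K := F)) (hk : 0 < k)
    (hpow : ∀ u : Fˣ, v u = 1 → u ^ k ∈ unitsNearOne (isNonarchimedean v hv)) (hΓ : Γ.FG)
    (hΓ1 : ∀ u ∈ Γ, v (u : F) = 1) (hε : 0 < ε) :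
    ∃ n₀ : ℕ, ∀ n ≥ n₀, ∀ u ∈ Γ, ∀ ζ : Fˣ, v ζ = 1 → ζ ^ n * u ≠ 1 →
      ∀ M : ℕ, v ((ζ ^ n * u : Fˣ) - 1) ≤ (1 / 2) ^ M →
        M ≤ ε * (logHeight₁ ((ζ ^ n * u : Fˣ) : F) + n) := by
  obtain ⟨s, hs⟩ := hΓ
  obtain ⟨n₀, hbound⟩ := exists_forall_le_mul_logHeight₁_prod_zpow_add hv
    (g := fun t : s ↦ (t : Fˣ) ^ k) (fun t ↦ hpow _ (hΓ1 _ (hs ▸ Subgroup.subset_closure t.2)))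
    (by positivity : 0 < ε / k)
  obtain ⟨n₁, hn₁⟩ := exists_nat_ge (totalWeight F / ε)
  refine ⟨max n₀ n₁, fun n hn u hu ζ hζ hΛ M hM ↦ ?_⟩
  obtain ⟨b, rfl⟩ : ∃ b : s → ℤ, u = ∏ t : s, (t : Fˣ) ^ b t :=
    Subgroup.exists_of_mem_closure_range _ u (by simpa [hs] using hu)
  have hform :
      (ζ ^ n * ∏ t : s, (t : Fˣ) ^ b t) ^ k = (ζ ^ k) ^ n * ∏ t : s, (t ^ k : Fˣ) ^ b t := by
    rw [mul_pow, pow_right_comm, ← Finset.prod_pow]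
    refine congrArg _ (Finset.prod_congr rfl fun t _ ↦ ?_)
    rw [← zpow_natCast, ← zpow_natCast, ← zpow_mul, ← zpow_mul, mul_comm]
  have hvΛ : v ((ζ ^ n * ∏ t : s, (t : Fˣ) ^ b t : Fˣ) : F) = 1 := by
    rw [Units.val_mul, Units.val_pow_eq_pow_val, map_mul, map_pow, hζ, one_pow, one_mul, hΓ1 _ hu]
  set Λ := ζ ^ n * ∏ t : s, (t : Fˣ) ^ b t
  by_cases hΛk : Λ ^ k = 1
  · have hliou := mul_log_two_le_of_abv_sub_one_le hv (Units.val_eq_one.not.2 hΛ) hM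
    have hzero : logHeight₁ (Λ : F) = 0 := logHeight₁_eq_zero_of_pow_eq_one hk <| by
      rw [← Units.val_pow_eq_pow_val, hΛk, Units.val_one]
    rw [hzero, add_zero] at hliou
    rw [hzero, zero_add]
    calc (M : ℝ) ≤ totalWeight F := le_of_mul_le_mul_right hliou (log_pos one_lt_two)
      _ ≤ ε * n₁ := (div_le_iff₀' hε).1 hn₁
      _ ≤ ε * n := by gcongr; exact (le_max_right _ _).trans hn
  · have hMk : v ((Λ ^ k : Fˣ) - 1) ≤ (1 / 2) ^ M := by
      rw [Units.val_pow_eq_pow_val]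
      exact (abv_pow_sub_one_le (isNonarchimedean v hv) hvΛ.le k).trans hM
    rw [hform] at hΛk hMk
    have hle := hbound n ((le_max_left _ _).trans hn) b _ (hpow ζ hζ) hΛk M hMk
    rw [← hform, Units.val_pow_eq_pow_val, logHeight₁_pow] at hle
    calc (M : ℝ) ≤ ε / k * (k * logHeight₁ (Λ : F) + n) := hle
      _ ≤ ε / k * (k * logHeight₁ (Λ : F) + k * n) := by
        gcongr
        exact le_mul_of_one_le_left n.cast_nonneg (Nat.one_le_cast.2 hk)
      _ = ε * (logHeight₁ (Λ : F) + n) := by field_simp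

end FinitelyGenerated

/-! ### Finite generation of groups of units outside a finite set of primes -/

section UnitsOutsidePrimes

open IsDedekindDomain

variable {R K : Type*} [CommRing R] [IsDedekindDomain R] [Field K] [Algebra R K]
  [IsFractionRing R K]

lemma unit_empty_eq_range :
    (∅ : Set (HeightOneSpectrum R)).unit K = (Units.map (algebraMap R K : R →* K)).range := by
  ext u
  refine ⟨fun hu ↦ ?_, ?_⟩
  · have hval (P : HeightOneSpectrum R) : P.valuation K (u : K) = 1 := hu P (Set.notMem_empty P)
    obtain ⟨a, ha⟩ := HeightOneSpectrum.mem_integers_of_valuation_le_one K (u : K)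
      fun P ↦ (hval P).le
    obtain ⟨b, hb⟩ := HeightOneSpectrum.mem_integers_of_valuation_le_one K (u : K)⁻¹
      fun P ↦ by rw [map_inv₀, hval P, inv_one]
    have hab : a * b = 1 := by
      apply FaithfulSMul.algebraMap_injective R K
      rw [map_mul, ha, hb, map_one, mul_inv_cancel₀ u.ne_zero]
    exact ⟨⟨a, b, hab, by rw [mul_comm, hab]⟩, Units.ext ha⟩
  · rintro ⟨y, rfl⟩ P -
    rw [← HeightOneSpectrum.valuationOfNeZero_eq, HeightOneSpectrum.valuation_of_unit_eq,
      WithZero.coe_one]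

lemma fg_unit_of_finite [Module.Finite ℤ (Additive Rˣ)] {T : Set (HeightOneSpectrum R)}
    (hT : T.Finite) : (T.unit K).FG := by
  have := hT.fintype
  let val : Additive Kˣ →+ (T → ℤ) :=
    AddMonoidHom.pi fun P ↦ MonoidHom.toAdditive (P.1.valuationOfNeZero (K := K))
  let incl := (MonoidHom.toAdditive (Units.map (algebraMap R K : R →* K))).toIntLinearMap
  let N := AddSubgroup.toIntSubmodule (T.unit K).toAddSubgroup
  have hker : N ⊓ LinearMap.ker val.toIntLinearMap = Submodule.map incl ⊤ := by
    ext x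
    have hrange : x ∈ Submodule.map incl ⊤ ↔ x.toMul ∈ (∅ : Set (HeightOneSpectrum R)).unit K := by
      rw [unit_empty_eq_range]
      exact ⟨fun ⟨y, _, hy⟩ ↦ ⟨y.toMul, hy⟩, fun ⟨y, hy⟩ ↦ ⟨Additive.ofMul y, trivial, hy⟩⟩
    have hval (P : HeightOneSpectrum R) :
        P.valuationOfNeZero x.toMul = 1 ↔ P.valuation K (x.toMul : K) = 1 := by
      rw [← HeightOneSpectrum.valuationOfNeZero_eq, ← WithZero.coe_one, WithZero.coe_inj]
    rw [hrange]
    refine ⟨fun ⟨hxT, hx⟩ P _ ↦ ?_, fun hx ↦ ⟨fun P _ ↦ hx P (Set.notMem_empty P), ?_⟩⟩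
    · by_cases hP : P ∈ T
      · exact (hval P).1 (congrFun (LinearMap.mem_ker.1 hx) ⟨P, hP⟩)
      · exact hxT P hP
    · exact LinearMap.mem_ker.2 (funext fun P ↦ (hval P.1).2 (hx P.1 (Set.notMem_empty P.1)))
  have hN : N.FG := by
    refine Submodule.fg_of_fg_map_of_fg_inf_ker val.toIntLinearMap (IsNoetherian.noetherian _) ?_
    rw [hker]
    exact Submodule.FG.map _ Module.Finite.fg_top
  rw [Subgroup.fg_iff_add_fg]
  exact (Submodule.fg_iff_addSubgroup_fg N).1 hN

end UnitsOutsidePrimes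

/-! ### Places of number fields -/

section FinitePlaces

open Height AdmissibleAbsValues NumberField IsDedekindDomain HeightOneSpectrum

variable {K : Type*} [Field K] [NumberField K] (P : HeightOneSpectrum (𝓞 K))

lemma adicAbv_mem_nonarchAbsVal : adicAbv K P ∈ nonarchAbsVal (K := K) :=
  ⟨P, AbsoluteValue.ext fun x ↦ FinitePlace.norm_embedding P x⟩

lemma adicAbv_lt_one_iff {x : K} : adicAbv K P x < 1 ↔ P.valuation K x < 1 := by
  rw [adicAbv_def, NNReal.coe_lt_one]
  exact WithZeroMulInt.toNNReal_lt_one_iff (one_lt_absNorm_nnreal P)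

lemma adicAbv_eq_one_iff {x : K} : adicAbv K P x = 1 ↔ P.valuation K x = 1 := by
  rw [adicAbv_def, NNReal.coe_eq_one]
  exact WithZeroMulInt.toNNReal_eq_one_iff _ (absNorm_ne_zero P) (one_lt_absNorm_nnreal P).ne'

lemma adicAbv_integer_le_one (x : 𝓞 K) : adicAbv K P x ≤ 1 :=
  P.adicAbv_coe_le_one (one_lt_absNorm_nnreal P) x

lemma adicAbv_integer_lt_one_iff {x : 𝓞 K} : adicAbv K P x < 1 ↔ x ∈ P.asIdeal :=
  P.adicAbv_coe_lt_one_iff (one_lt_absNorm_nnreal P) x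

lemma adicAbv_integer_eq_one_iff {x : 𝓞 K} : adicAbv K P x = 1 ↔ x ∉ P.asIdeal :=
  P.adicAbv_coe_eq_one_iff (one_lt_absNorm_nnreal P) x

lemma adicAbv_le_half_of_lt_one {x : K} (hx : adicAbv K P x < 1) : adicAbv K P x ≤ 1 / 2 := by
  have hval : P.valuation K x ≤ WithZero.exp (-1) := by
    rw [← WithZero.lt_mul_exp_iff_le WithZero.exp_ne_zero, ← WithZero.exp_add]
    simpa using (adicAbv_lt_one_iff P).1 hx
  have hle := (WithZeroMulInt.toNNReal_strictMono (one_lt_absNorm_nnreal P)).monotone hval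
  have hexp : WithZeroMulInt.toNNReal (absNorm_ne_zero P) (WithZero.exp (-1)) =
      (Ideal.absNorm P.asIdeal : NNReal)⁻¹ := by
    rw [WithZeroMulInt.toNNReal_neg_apply _ WithZero.exp_ne_zero]
    exact zpow_neg_one _
  rw [hexp] at hle
  calc adicAbv K P x ≤ (Ideal.absNorm P.asIdeal : ℝ)⁻¹ := by
        rw [adicAbv_def]
        exact_mod_cast NNReal.coe_le_coe.2 hle
    _ ≤ 1 / 2 := by
      rw [one_div]
      exact inv_anti₀ two_pos (by exact_mod_cast one_lt_absNorm P)

lemma exists_pow_mem_unitsNearOne :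
    ∃ k, 0 < k ∧
      ∀ u : Kˣ, adicAbv K P u = 1 → u ^ k ∈ unitsNearOne (isNonarchimedean_adicAbv K P) := by
  have := P.isMaximal
  let _ := Ideal.Quotient.field P.asIdeal
  have : Finite (𝓞 K ⧸ P.asIdeal) := Ideal.finiteQuotientOfFreeOfNeBot _ P.ne_bot
  have := Fintype.ofFinite (𝓞 K ⧸ P.asIdeal)
  obtain ⟨k, hk⟩ : ∃ k, k = Fintype.card (𝓞 K ⧸ P.asIdeal) - 1 := ⟨_, rfl⟩
  refine ⟨k, by have := Fintype.one_lt_card (α := 𝓞 K ⧸ P.asIdeal); omega, fun u hu ↦ ?_⟩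
  rw [mem_unitsNearOne, Units.val_pow_eq_pow_val]
  refine adicAbv_le_half_of_lt_one P ?_
  obtain ⟨a, ha⟩ := P.exists_valuation_sub_lt_of_integer ((adicAbv_eq_one_iff P).1 hu).le 1
  rw [Units.val_one, ← adicAbv_lt_one_iff] at ha
  have haP : a ∉ P.asIdeal := fun haP ↦ by
    have hadd := adicAbv_add_le_max K P (a : K) (u - a)
    rw [add_sub_cancel, hu, AbsoluteValue.map_sub] at hadd
    exact hadd.not_gt (max_lt ((adicAbv_integer_lt_one_iff P).2 haP) ha)
  have hfermat : a ^ k - 1 ∈ P.asIdeal := by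
    rw [← Ideal.Quotient.eq_zero_iff_mem, map_sub, map_pow, map_one, hk,
      FiniteField.pow_card_sub_one_eq_one, sub_self]
    rwa [Ne, Ideal.Quotient.eq_zero_iff_mem]
  have hpow : adicAbv K P ((a : K) ^ k - 1) < 1 := by
    simpa using (adicAbv_integer_lt_one_iff P).2 hfermat
  have hva : adicAbv K P a = 1 := (adicAbv_integer_eq_one_iff P).2 haP
  have ha0 : (a : K) ≠ 0 := fun h ↦ by simp [h] at hva
  have hua : adicAbv K P ((u / a : K) ^ k - 1) < 1 := by
    refine (abv_pow_sub_one_le (isNonarchimedean_adicAbv K P) ?_ k).trans_lt ?_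
    · rw [map_div₀, hu, hva, div_one]
    · rwa [div_sub_one ha0, map_div₀, hva, div_one, AbsoluteValue.map_sub]
  rw [show (u : K) ^ k - 1 = ((u / a) ^ k - 1) * a ^ k + (a ^ k - 1) by
    rw [div_pow, sub_mul, div_mul_cancel₀ _ (pow_ne_zero k ha0)]; ring]
  refine (adicAbv_add_le_max K P _ _).trans_lt (max_lt ?_ hpow)
  rwa [map_mul, map_pow, hva, one_pow, mul_one]

lemma exists_natCast_mem_asIdeal {p : ℕ} (hp : p.Prime) :
    ∃ P : HeightOneSpectrum (𝓞 K), (p : 𝓞 K) ∈ P.asIdeal := by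
  have : (Ideal.span {(p : ℤ)}).IsMaximal :=
    Ideal.IsPrime.isMaximal ((Ideal.span_singleton_prime (by exact_mod_cast hp.ne_zero)).2
      (Nat.prime_iff_prime_int.1 hp)) (by simpa using hp.ne_zero)
  obtain ⟨Q, hQ, hQp⟩ :=
    Ideal.exists_maximal_ideal_liesOver_of_isIntegral (S := 𝓞 K) (Ideal.span {(p : ℤ)})
  have hpQ : (p : 𝓞 K) ∈ Q := by
    have : (p : ℤ) ∈ Q.under ℤ := hQp.over ▸ Ideal.mem_span_singleton_self _
    simpa [Ideal.mem_comap] using this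
  refine ⟨⟨Q, hQ.isPrime, fun hQ0 ↦ hp.ne_zero ?_⟩, hpQ⟩
  rw [hQ0, Ideal.mem_bot] at hpQ
  exact_mod_cast hpQ

variable {P} {p : ℕ}

lemma adicAbv_intCast_eq_one_of_not_dvd (hp : p.Prime) (hpP : (p : 𝓞 K) ∈ P.asIdeal) {m : ℤ}
    (hm : ¬ (p : ℤ) ∣ m) : adicAbv K P (m : K) = 1 := by
  obtain ⟨a, b, hab⟩ := (Nat.prime_iff_prime_int.1 hp).coprime_iff_not_dvd.2 hm
  have hmP : (m : 𝓞 K) ∉ P.asIdeal := fun hmP ↦ P.isPrime.ne_top <| by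
    rw [Ideal.eq_top_iff_one, show (1 : 𝓞 K) = a * (p : 𝓞 K) + b * m by exact_mod_cast hab.symm]
    exact add_mem (Ideal.mul_mem_left _ _ hpP) (Ideal.mul_mem_left _ _ hmP)
  simpa using (adicAbv_integer_eq_one_iff P).2 hmP

lemma adicAbv_intCast_eq_pow (hp : p.Prime) (hpP : (p : 𝓞 K) ∈ P.asIdeal) {m : ℤ} (hm : m ≠ 0) :
    adicAbv K P (m : K) = adicAbv K P (p : K) ^ padicValInt p m := by
  have := Fact.mk hp
  obtain ⟨m', hm'⟩ := padicValInt_dvd (p := p) m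
  have hpm' : ¬ (p : ℤ) ∣ m' := fun hdvd ↦ by
    have hdvd' : (p : ℤ) ^ (padicValInt p m + 1) ∣ m := by
      conv_rhs => rw [hm']
      exact pow_succ (p : ℤ) _ ▸ mul_dvd_mul_left _ hdvd
    rw [padicValInt_dvd_iff] at hdvd'
    omega
  conv_lhs => rw [hm']
  rw [Int.cast_mul, map_mul, adicAbv_intCast_eq_one_of_not_dvd hp hpP hpm', mul_one, Int.cast_pow,
    map_pow, Int.cast_natCast]

lemma adicAbv_intCast_le_half_pow (hp : p.Prime) (hpP : (p : 𝓞 K) ∈ P.asIdeal) {m : ℤ}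
    (hm : m ≠ 0) : adicAbv K P (m : K) ≤ (1 / 2) ^ padicValInt p m := by
  rw [adicAbv_intCast_eq_pow hp hpP hm]
  have hlt := (adicAbv_integer_lt_one_iff P).2 hpP
  exact pow_le_pow_left₀ ((adicAbv K P).nonneg _)
    (adicAbv_le_half_of_lt_one P (by simpa using hlt)) _

end FinitePlaces

/-! ### Units outside the primes above a finite set of rational primes -/

section UnitsOutside

open Height AdmissibleAbsValues NumberField IsDedekindDomain HeightOneSpectrum

variable {K : Type*} [Field K] [NumberField K] (P : HeightOneSpectrum (𝓞 K))

lemma exists_forall_mem_unit_le_mul_logHeight₁_pow_mul_add {T : Set (HeightOneSpectrum (𝓞 K))}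
    (hT : T.Finite) {ε c : ℝ} (hε : 0 < ε) (hc : 0 < c) :
    ∃ (n₀ : ℕ) (C : ℝ), ∀ n ≥ n₀, ∀ u ∈ T.unit K, ∀ ζ : Kˣ, adicAbv K P ζ = 1 → ζ ^ n * u ≠ 1 →
      ∀ M : ℕ, c * adicAbv K P ((ζ ^ n * u : Kˣ) - 1) ≤ (1 / 2) ^ M →
        M ≤ ε * (logHeight₁ ((ζ ^ n * u : Kˣ) : K) + n) + C := by
  obtain ⟨k, hk, hpow⟩ := exists_pow_mem_unitsNearOne P
  obtain ⟨n₀, hbound⟩ := exists_forall_le_mul_logHeight₁_pow_mul_add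
    (adicAbv_mem_nonarchAbsVal P) hk hpow (fg_unit_of_finite (T := T \ {P}) hT.sdiff)
    (fun u hu ↦ (adicAbv_eq_one_iff P).2 (hu P fun hP ↦ hP.2 rfl)) hε
  obtain ⟨D, hD⟩ := exists_pow_lt_of_lt_one hc (one_half_lt_one (α := ℝ))
  refine ⟨n₀, D, fun n hn u hu ζ hζ hΛ M hM ↦ ?_⟩
  have := zero_le_logHeight₁ ((ζ ^ n * u : Kˣ) : K)
  rcases le_or_gt M D with hMD | hMD
  · exact le_add_of_nonneg_of_le (by positivity) (Nat.cast_le.2 hMD)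
  obtain ⟨N, rfl⟩ := Nat.exists_eq_add_of_lt hMD
  have hvΛ : adicAbv K P ((ζ ^ n * u : Kˣ) - 1) ≤ (1 / 2) ^ (N + 1) := by
    refine le_of_mul_le_mul_left ?_ (pow_pos (one_half_pos (α := ℝ)) D)
    rw [← pow_add, ← add_assoc]
    exact (mul_le_mul_of_nonneg_right hD.le ((adicAbv K P).nonneg _)).trans hM
  have hvu : adicAbv K P u = 1 := by
    have hone := abv_eq_one_of_sub_one_lt (isNonarchimedean_adicAbv K P) <|
      hvΛ.trans_lt (pow_lt_one₀ (by norm_num) one_half_lt_one N.succ_ne_zero)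
    rwa [Units.val_mul, Units.val_pow_eq_pow_val, map_mul, map_pow, hζ, one_pow, one_mul] at hone
  have huT : u ∈ (T \ {P}).unit K := fun Q hQ ↦ by
    by_cases hQP : Q = P
    · exact hQP ▸ (adicAbv_eq_one_iff P).1 hvu
    · exact hu Q fun hQT ↦ hQ ⟨hQT, hQP⟩
  have hle := hbound n hn u huT ζ hζ hΛ (N + 1) hvΛ
  push_cast at hle ⊢
  linarith

lemma exists_forall_mem_unit_le_mul_logHeight₁_add {T : Set (HeightOneSpectrum (𝓞 K))}
    (hT : T.Finite) {ε c : ℝ} (hε : 0 < ε) (hc : 0 < c) :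
    ∃ C : ℝ, ∀ u ∈ T.unit K, u ≠ 1 → ∀ M : ℕ, c * adicAbv K P ((u : K) - 1) ≤ (1 / 2) ^ M →
      M ≤ ε * logHeight₁ (u : K) + C := by
  obtain ⟨n₀, C, hbound⟩ := exists_forall_mem_unit_le_mul_logHeight₁_pow_mul_add P hT hε hc
  refine ⟨ε * n₀ + C, fun u hu hu1 M hM ↦ ?_⟩
  have hle := hbound n₀ le_rfl u hu 1 (by simp) (by simpa using hu1) M (by simpa using hM)
  rwa [one_pow, one_mul, mul_add, add_assoc] at hle

end UnitsOutside

section PrimesAbove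

open IsDedekindDomain HeightOneSpectrum

variable {R : Type*} [CommRing R] {S : Finset ℕ}

variable (R) in
/-- The primes of `R` above the elements of `S`. The units of `Frac R` outside these primes play
the role of the `S`-units of `ℤ`. -/
def primesAbove (S : Finset ℕ) : Set (HeightOneSpectrum R) :=
  {P | ∃ p ∈ S, (p : R) ∈ P.asIdeal}

lemma finite_primesAbove [IsDedekindDomain R] [CharZero R] (hS : ∀ p ∈ S, p.Prime) :
    (primesAbove R S).Finite := by
  have hunion : primesAbove R S = ⋃ p ∈ S, {P | (p : R) ∈ P.asIdeal} := by
    ext P; simp [primesAbove]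
  rw [hunion]
  refine S.finite_toSet.biUnion fun p hp ↦ ?_
  have hp0 : Ideal.span {(p : R)} ≠ 0 := by
    rw [Ne, Ideal.zero_eq_bot, Ideal.span_singleton_eq_bot]
    exact_mod_cast (hS p hp).ne_zero
  exact (Ideal.finite_factors hp0).subset fun P hP ↦ Ideal.dvd_span_singleton.2 hP

lemma IsSUnit.mem_primesAbove {m : ℤ} (hm : IsSUnit S m) {P : HeightOneSpectrum R}
    (hmP : (m : R) ∈ P.asIdeal) : P ∈ primesAbove R S := by
  have := P.isPrime
  have habs : (m.natAbs : R) ∈ P.asIdeal := by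
    rcases Int.natAbs_eq m with h | h <;> rw [h] at hmP <;> simpa using hmP
  rw [← Nat.prod_factorization_pow_eq_self (Int.natAbs_ne_zero.2 hm.1), Finsupp.prod,
    Nat.cast_prod, Ideal.IsPrime.prod_mem_iff] at habs
  obtain ⟨p, hp, hpP⟩ := habs
  rw [Nat.support_factorization, Nat.mem_primeFactors] at hp
  rw [Nat.cast_pow] at hpP
  exact ⟨p, hm.2 p hp.1 (Int.natCast_dvd.2 hp.2.1), this.mem_of_pow_mem _ hpP⟩

lemma IsSUnit.mem_unit_of_dvd [IsDedekindDomain R] {K : Type*} [Field K] [Algebra R K]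
    [IsFractionRing R K] {m : ℤ} (hm : IsSUnit S m) {x : R} (hx : x ∣ (m : R)) {u : Kˣ}
    (hu : (u : K) = algebraMap R K x) : u ∈ (primesAbove R S).unit K := fun P hP ↦ by
  rw [hu, valuation_eq_one_iff_notMem]
  exact fun hxP ↦ hP (hm.mem_primesAbove (P.asIdeal.mem_of_dvd hx hxP))

end PrimesAbove

/-! ### Integers supported on a finite set of primes -/

section Integers

open Real

variable {S : Finset ℕ} {y : ℤ}

lemma IsSUnit.natAbs_eq_prod (hS : ∀ p ∈ S, p.Prime) (hy : IsSUnit S y) :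
    y.natAbs = ∏ p ∈ S, p ^ padicValInt p y := by
  conv_lhs => rw [← Nat.prod_factorization_pow_eq_self (Int.natAbs_ne_zero.2 hy.1)]
  rw [Finsupp.prod_of_support_subset (s := S) _ _ _ fun _ _ ↦ pow_zero _]
  · refine Finset.prod_congr rfl fun p hp ↦ ?_
    rw [Nat.factorization_def _ (hS p hp), padicValInt]
  · intro p hp
    rw [Nat.support_factorization, Nat.mem_primeFactors] at hp
    exact hy.2 p hp.1 (Int.natCast_dvd.2 hp.2.1)

lemma IsSUnit.log_abs_eq_sum (hS : ∀ p ∈ S, p.Prime) (hy : IsSUnit S y) :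
    log |(y : ℝ)| = ∑ p ∈ S, padicValInt p y * log p := by
  rw [← Int.cast_abs, Int.abs_eq_natAbs, Int.cast_natCast, hy.natAbs_eq_prod hS, Nat.cast_prod,
    log_prod fun p hp ↦ Nat.cast_ne_zero.2 (pow_ne_zero _ (hS p hp).ne_zero)]
  simp only [Nat.cast_pow, log_pow]

lemma one_le_abs_intCast (hy : y ≠ 0) : (1 : ℝ) ≤ |(y : ℝ)| := by
  exact_mod_cast Int.one_le_abs hy

lemma exists_pos_forall_finite_of_padicValInt_le (hS : ∀ p ∈ S, p.Prime) :
    ∃ ε : ℝ, 0 < ε ∧ ∀ Q : Set ℤ, (∀ y ∈ Q, IsSUnit S y) →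
      (∀ p ∈ S, ∃ A : ℝ, ∀ y ∈ Q, padicValInt p y ≤ ε * log |(y : ℝ)| + A) → Q.Finite := by
  obtain ⟨ε, hε, hsum⟩ := exists_pos_mul_lt one_half_pos (∑ p ∈ S, log (p : ℝ))
  refine ⟨ε, hε, fun Q hQ h ↦ ?_⟩
  choose! A hA using h
  obtain ⟨Y, hY⟩ := exists_nat_ge (exp (2 * ∑ p ∈ S, A p * log p))
  refine (Set.finite_Icc (-(Y : ℤ)) Y).subset fun y hy ↦ ?_
  have hy1 := one_le_abs_intCast (hQ y hy).1
  have hlog : log |(y : ℝ)| ≤ 1 / 2 * log |(y : ℝ)| + ∑ p ∈ S, A p * log p :=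
    calc log |(y : ℝ)| = ∑ p ∈ S, padicValInt p y * log p := (hQ y hy).log_abs_eq_sum hS
      _ ≤ ∑ p ∈ S, (ε * log |(y : ℝ)| + A p) * log p := by
        gcongr with p hp
        exact hA p hp y hy
      _ = (∑ p ∈ S, log (p : ℝ)) * ε * log |(y : ℝ)| + ∑ p ∈ S, A p * log p := by
        simp only [add_mul, Finset.sum_add_distrib, ← Finset.mul_sum]; ring
      _ ≤ 1 / 2 * log |(y : ℝ)| + ∑ p ∈ S, A p * log p := by
        gcongr
        exact log_nonneg hy1
  have hle : |(y : ℝ)| ≤ Y := by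
    rw [← exp_log (one_pos.trans_le hy1)]
    exact (exp_le_exp.2 (by linarith)).trans hY
  exact Set.mem_Icc.2 (abs_le.1 (by exact_mod_cast hle))

lemma padicValInt_le_or_of_gcd_le {p a : ℕ} (hp : p.Prime) {x : ℤ} (hx : x ≠ 0)
    (hgcd : Int.gcd x y ≤ a) : padicValInt p x ≤ a ∨ padicValInt p y ≤ a := by
  have := Fact.mk hp
  by_contra! hlt
  have hdvd : ((p ^ a : ℕ) : ℤ) ∣ Int.gcd x y := by
    push_cast
    exact Int.dvd_coe_gcd ((pow_dvd_pow _ hlt.1.le).trans (padicValInt_dvd x))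
      ((pow_dvd_pow _ hlt.2.le).trans (padicValInt_dvd y))
  have hle := Nat.le_of_dvd (Int.gcd_pos_of_ne_zero_left _ hx) (Int.natCast_dvd_natCast.1 hdvd)
  exact (a.lt_pow_self hp.one_lt).not_ge (hle.trans hgcd)

end Integers

/-! ### The equation `x + y = w * z ^ n` in `S`-units `x`, `y`, `w` -/

section LocalBound

open NumberField IsDedekindDomain HeightOneSpectrum

variable {K : Type*} [Field K] [NumberField K] {P : HeightOneSpectrum (𝓞 K)} {p : ℕ}

lemma adicAbv_natCast_pos (hp : p.Prime) : 0 < adicAbv K P p :=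
  (adicAbv K P).pos (Nat.cast_ne_zero.2 hp.ne_zero)

lemma adicAbv_pow_le_of_padicValInt_le (hp : p.Prime) (hpP : (p : 𝓞 K) ∈ P.asIdeal) {a : ℕ} {m : ℤ}
    (hm : m ≠ 0) (ha : padicValInt p m ≤ a) : adicAbv K P p ^ a ≤ adicAbv K P m := by
  rw [adicAbv_intCast_eq_pow hp hpP hm]
  exact pow_le_pow_of_le_one (adicAbv_natCast_pos hp).le
    (by simpa using adicAbv_intCast_le_one K P p) ha

end LocalBound

/-- `(x, y, w, z)` solves `x + y = w * z ^ n` in `S`-units `x`, `y`, `w` with `gcd (x, y) ≤ a`,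
ordered such that `|x| ≤ |y|`. -/
structure IsSUnitSolution (S : Finset ℕ) (a n : ℕ) (x y w z : ℤ) : Prop where
  isSUnit_fst : IsSUnit S x
  isSUnit_snd : IsSUnit S y
  isSUnit_coeff : IsSUnit S w
  gcd_le : Int.gcd x y ≤ a
  abs_le : |x| ≤ |y|
  base_ne_zero : z ≠ 0
  add_eq : x + y = w * z ^ n

namespace IsSUnitSolution

open Height AdmissibleAbsValues Real

variable {S : Finset ℕ} {a n : ℕ} {x y w z : ℤ}

lemma abs_add_le (h : IsSUnitSolution S a n x y w z) : |x + y| ≤ 2 * |y| := by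
  linarith [_root_.abs_add_le x y, h.abs_le]

lemma log_abs_nonneg (h : IsSUnitSolution S a n x y w z) : 0 ≤ log |(y : ℝ)| :=
  log_nonneg (one_le_abs_intCast h.isSUnit_snd.1)

lemma natCast_le (h : IsSUnitSolution S a n x y w z) (hz : 2 ≤ |z|) :
    (n : ℝ) ≤ 2 * log |(y : ℝ)| + 2 := by
  have hpow : (2 : ℤ) ^ n ≤ 2 * |y| :=
    calc (2 : ℤ) ^ n ≤ |z| ^ n := pow_le_pow_left₀ zero_le_two hz n
      _ ≤ |w| * |z| ^ n :=
        le_mul_of_one_le_left (by positivity) (Int.one_le_abs h.isSUnit_coeff.1)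
      _ = |x + y| := by rw [h.add_eq, abs_mul, abs_pow]
      _ ≤ 2 * |y| := h.abs_add_le
  have hy := one_le_abs_intCast h.isSUnit_snd.1
  have hlog : n * log 2 ≤ log 2 + log |(y : ℝ)| := by
    rw [← log_pow, ← log_mul two_ne_zero (by positivity)]
    exact log_le_log (by positivity) (by exact_mod_cast hpow)
  nlinarith [log_two_gt_d9, log_two_lt_d9, n.cast_nonneg (α := ℝ)]

section Heights

variable (F : Type*) [Field F] [AdmissibleAbsValues F]

lemma logHeight₁_fst_le (h : IsSUnitSolution S a n x y w z) :
    logHeight₁ (x : F) ≤ totalWeight F * log |(y : ℝ)| :=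
  logHeight₁_intCast_le (one_le_abs_intCast h.isSUnit_snd.1) (by exact_mod_cast h.abs_le)

lemma logHeight₁_snd_le (h : IsSUnitSolution S a n x y w z) :
    logHeight₁ (y : F) ≤ totalWeight F * log |(y : ℝ)| :=
  logHeight₁_intCast_le (one_le_abs_intCast h.isSUnit_snd.1) le_rfl

lemma logHeight₁_add_le (h : IsSUnitSolution S a n x y w z) :
    logHeight₁ (x + y : F) ≤ totalWeight F * (log 2 + log |(y : ℝ)|) := by
  have hy := one_le_abs_intCast h.isSUnit_snd.1
  rw [← log_mul two_ne_zero (by positivity)]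
  have hle := logHeight₁_intCast_le (F := F) (m := x + y) (B := 2 * |(y : ℝ)|) (by linarith)
    (by exact_mod_cast h.abs_add_le)
  rwa [Int.cast_add] at hle

end Heights

end IsSUnitSolution

section Roots

open NumberField Polynomial

lemma exists_aeval_eq_zero_of_splits {K : Type*} [Field K] {g : ℤ[X]} (hg : g.Monic)
    (hdeg : g.natDegree ≠ 0) (hsplits : (g.map (Int.castRingHom K)).Splits) :
    ∃ r : 𝓞 K, aeval r g = 0 := by
  obtain ⟨r, hr⟩ := hsplits.exists_eval_eq_zero <| by
    rwa [hg.degree_map, degree_eq_natDegree hg.ne_zero, Nat.cast_ne_zero]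
  rw [eval_map] at hr
  exact ⟨⟨r, g, hg, hr⟩, (aeval_algebraMap_eq_zero_iff_of_injective
    RingOfIntegers.coe_injective).1 hr⟩

lemma exists_numberField_forall_aeval_eq_zero {A : Finset ℤ[X]}
    (hA : ∀ g ∈ A, g.Monic ∧ g.natDegree ≠ 0) :
    ∃ (K : Type) (_ : Field K) (_ : NumberField K), ∀ g ∈ A, ∃ r : 𝓞 K, aeval r g = 0 := by
  set f : ℚ[X] := ∏ g ∈ A, g.map (Int.castRingHom ℚ)
  have hf : f ≠ 0 := Finset.prod_ne_zero_iff.2 fun g hg ↦ ((hA g hg).1.map _).ne_zero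
  refine ⟨f.SplittingField, inferInstance, { }, fun g hg ↦ ?_⟩
  refine exists_aeval_eq_zero_of_splits (hA g hg).1 (hA g hg).2 ?_
  rw [Subsingleton.elim (Int.castRingHom f.SplittingField)
    ((algebraMap ℚ f.SplittingField).comp (Int.castRingHom ℚ)), ← map_map]
  exact (SplittingField.splits f).of_dvd (map_ne_zero hf)
    (map_dvd (mapRingHom _) (Finset.dvd_prod_of_mem _ hg))

lemma exists_numberField_pow_eq_intCast (A : Finset ℤ) {ν : ℕ} (hν : 2 ≤ ν) :
    ∃ (K : Type) (_ : Field K) (_ : NumberField K), (∃ ζ : 𝓞 K, ζ ^ ν = 1 ∧ ζ ≠ 1) ∧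
      ∀ m ∈ A, ∃ r : 𝓞 K, r ^ ν = m := by
  have hν0 : 0 < ν := zero_lt_two.trans_le hν
  have := NeZero.of_pos hν0
  obtain ⟨K, _, _, hroots⟩ := exists_numberField_forall_aeval_eq_zero
    (A := insert (cyclotomic ν ℤ) (A.image fun m ↦ X ^ ν - C m)) <| by
      simp only [Finset.forall_mem_insert, Finset.forall_mem_image]
      refine ⟨⟨cyclotomic.monic ν ℤ, ?_⟩, fun m _ ↦ ⟨monic_X_pow_sub_C m hν0.ne', ?_⟩⟩
      · rw [natDegree_cyclotomic]
        exact (Nat.totient_pos.2 hν0).ne'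
      · rw [natDegree_X_pow_sub_C]
        exact hν0.ne'
  simp only [Finset.forall_mem_insert, Finset.forall_mem_image] at hroots
  refine ⟨K, _, ‹_›, ?_, fun m hm ↦ ?_⟩
  · obtain ⟨ζ, hζ⟩ := hroots.1
    have hprim : IsPrimitiveRoot ζ ν := isRoot_cyclotomic_iff.1 <| by
      rwa [aeval_def, eval₂_eq_eval_map, map_cyclotomic] at hζ
    exact ⟨ζ, hprim.pow_eq_one, hprim.ne_one hν⟩
  · obtain ⟨r, hr⟩ := hroots.2 hm
    exact ⟨r, by simpa [sub_eq_zero] using hr⟩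

end Roots

section FixedExponent

open Height AdmissibleAbsValues NumberField IsDedekindDomain HeightOneSpectrum Real

variable {S : Finset ℕ} {ν : ℕ}

lemma IsSUnit.exists_pow_eq (hS : ∀ p ∈ S, p.Prime) {R : Type*} [CommRing R]
    (hneg : ∃ r : R, r ^ ν = -1) (hroot : ∀ p ∈ S, ∃ r : R, r ^ ν = p) {m : ℤ} (hm : IsSUnit S m) :
    ∃ r : R, r ^ ν = m := by
  choose! r hr using hroot
  have habs : (∏ p ∈ S, r p ^ padicValInt p m) ^ ν = (m.natAbs : R) := by
    rw [hm.natAbs_eq_prod hS, Nat.cast_prod, ← Finset.prod_pow]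
    refine Finset.prod_congr rfl fun p hp ↦ ?_
    rw [pow_right_comm, hr p hp, Nat.cast_pow]
  obtain ⟨s, hs⟩ := hneg
  rcases m.natAbs_eq with h | h <;> rw [h]
  · exact ⟨_, by rw [habs, Int.cast_natCast]⟩
  · exact ⟨s * ∏ p ∈ S, r p ^ padicValInt p m, by
      rw [mul_pow, hs, habs, neg_one_mul, Int.cast_neg, Int.cast_natCast]⟩

lemma exists_numberField_forall_isSUnit_pow_eq (hS : ∀ p ∈ S, p.Prime) (hν : 2 ≤ ν) :
    ∃ (K : Type) (_ : Field K) (_ : NumberField K), (∃ ζ : 𝓞 K, ζ ^ ν = 1 ∧ ζ ≠ 1) ∧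
      ∀ m, IsSUnit S m → ∃ r : 𝓞 K, r ^ ν = m := by
  obtain ⟨K, _, _, hζ, hroot⟩ :=
    exists_numberField_pow_eq_intCast (insert (-1) (S.image fun p : ℕ ↦ (p : ℤ))) hν
  simp only [Finset.forall_mem_insert, Finset.forall_mem_image, Int.cast_neg, Int.cast_one,
    Int.cast_natCast] at hroot
  exact ⟨K, _, ‹_›, hζ, fun m hm ↦ hm.exists_pow_eq hS hroot.1 fun p hp ↦ hroot.2 hp⟩

lemma logHeight₁_sub_div_sub_mul_le {F : Type*} [Field F] [AdmissibleAbsValues F] {ζ : F}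
    (hν : 0 < ν) (hζ : ζ ^ ν = 1) (X Y : F) :
    logHeight₁ ((X - Y) / (X - ζ * Y)) ≤
      2 * (totalWeight F * log 2 + logHeight₁ X + logHeight₁ Y) := by
  have hζY := logHeight₁_mul_le ζ Y
  rw [logHeight₁_eq_zero_of_pow_eq_one hν hζ, zero_add] at hζY
  have hdiv := logHeight₁_mul_le (X - Y) (X - ζ * Y)⁻¹
  rw [logHeight₁_inv, ← div_eq_mul_inv] at hdiv
  linarith [logHeight₁_sub_le X Y, logHeight₁_sub_le X (ζ * Y)]

variable {K : Type*} [Field K] [NumberField K]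

lemma adicAbv_mul_div_sub_one_le (P : HeightOneSpectrum (𝓞 K)) {x A B : 𝓞 K} (hx : x ≠ 0)
    (hB : B ∣ x) : adicAbv K P x * adicAbv K P ((A : K) / B - 1) ≤ adicAbv K P ((A : K) - B) := by
  have hB0 : (B : K) ≠ 0 := RingOfIntegers.coe_ne_zero_iff.2 (ne_zero_of_dvd_ne_zero hx hB)
  obtain ⟨q, rfl⟩ := hB
  have heq : ((B * q : 𝓞 K) : K) * ((A : K) / B - 1) = q * ((A : K) - B) := by
    push_cast
    field_simp
  rw [← map_mul, heq, map_mul]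
  exact mul_le_of_le_one_left ((adicAbv K P).nonneg _) (adicAbv_integer_le_one P q)

lemma IsSUnit.exists_mem_unit_eq_div {x : ℤ} (hx : IsSUnit S x) {A B : 𝓞 K}
    (hA : A ∣ (x : 𝓞 K)) (hB : B ∣ (x : 𝓞 K)) :
    ∃ u ∈ (primesAbove (𝓞 K) S).unit K, (u : K) = A / B := by
  have hx0 : (x : 𝓞 K) ≠ 0 := Int.cast_ne_zero.2 hx.1
  have hne {D : 𝓞 K} (hD : D ∣ (x : 𝓞 K)) : (D : K) ≠ 0 :=
    RingOfIntegers.coe_ne_zero_iff.2 (ne_zero_of_dvd_ne_zero hx0 hD)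
  refine ⟨.mk0 A (hne hA) / .mk0 B (hne hB),
    div_mem (hx.mem_unit_of_dvd hA rfl) (hx.mem_unit_of_dvd hB rfl), ?_⟩
  rw [Units.val_div_eq_div_val, Units.val_mk0, Units.val_mk0]

lemma adicAbv_le_half_pow_of_pow_eq {P : HeightOneSpectrum (𝓞 K)} {p : ℕ} (hp : p.Prime)
    (hpP : (p : 𝓞 K) ∈ P.asIdeal) (hν : 0 < ν) {y : ℤ} (hy : y ≠ 0) {Y : 𝓞 K} (hY : Y ^ ν = y) :
    adicAbv K P (Y : K) ≤ (1 / 2) ^ (padicValInt p y / ν) := by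
  refine le_of_pow_le_pow_left₀ hν.ne' (by positivity) ?_
  calc adicAbv K P (Y : K) ^ ν = adicAbv K P (y : K) := by
        rw [← map_pow, ← map_pow, hY, map_intCast]
    _ ≤ (1 / 2) ^ padicValInt p y := adicAbv_intCast_le_half_pow hp hpP hy
    _ ≤ (1 / 2) ^ (padicValInt p y / ν * ν) :=
      pow_le_pow_of_le_one (by norm_num) (by norm_num) (Nat.div_mul_le_self _ _)
    _ = ((1 / 2) ^ (padicValInt p y / ν)) ^ ν := pow_mul _ _ _

lemma logHeight₁_le_logHeight₁_pow {F : Type*} [Field F] [AdmissibleAbsValues F] (hν : 0 < ν)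
    (x : F) : logHeight₁ x ≤ logHeight₁ (x ^ ν) := by
  rw [logHeight₁_pow]
  exact le_mul_of_one_le_left (zero_le_logHeight₁ x) (Nat.one_le_cast.2 hν)

end FixedExponent

section FixedExponentBound

open Height AdmissibleAbsValues NumberField IsDedekindDomain HeightOneSpectrum Real

variable {S : Finset ℕ} {a ν : ℕ} {K : Type*} [Field K] [NumberField K] {ζ : 𝓞 K}

lemma IsSUnitSolution.exists_mem_unit {x y w z : ℤ} (h : IsSUnitSolution S a ν x y w z)
    (hν : 0 < ν) (hζ : ζ ^ ν = 1) (hζ1 : ζ ≠ 1) (hroot : ∀ m, IsSUnit S m → ∃ r : 𝓞 K, r ^ ν = m) :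
    ∃ u ∈ (primesAbove (𝓞 K) S).unit K, u ≠ 1 ∧
      logHeight₁ (u : K) ≤ 4 * totalWeight K * (log 2 + log |(y : ℝ)|) ∧
      ∃ Y : 𝓞 K, Y ^ ν = y ∧ ∀ P : HeightOneSpectrum (𝓞 K),
        adicAbv K P (x : K) * adicAbv K P ((u : K) - 1) ≤ adicAbv K P (Y : K) := by
  obtain ⟨Y, hY⟩ := hroot y h.isSUnit_snd
  obtain ⟨W, hW⟩ := hroot w h.isSUnit_coeff
  set X : 𝓞 K := W * z
  have hX : X ^ ν = x + y := by
    rw [mul_pow, hW, ← Int.cast_add, h.add_eq, Int.cast_mul, Int.cast_pow]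
  have hXY : X ^ ν - Y ^ ν = x := by rw [hX, hY, add_sub_cancel_right]
  have hx0 : (x : 𝓞 K) ≠ 0 := Int.cast_ne_zero.2 h.isSUnit_fst.1
  have hdvd : X - ζ * Y ∣ (x : 𝓞 K) := by
    simpa [mul_pow, hζ, hXY] using sub_dvd_pow_sub_pow X (ζ * Y) ν
  obtain ⟨u, hu, hueq⟩ := h.isSUnit_fst.exists_mem_unit_eq_div
    (hXY ▸ sub_dvd_pow_sub_pow X Y ν) hdvd
  refine ⟨u, hu, ?_, ?_, Y, hY, fun P ↦ ?_⟩
  · rintro rfl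
    have hY0 : Y ≠ 0 := by
      rintro rfl
      exact h.isSUnit_snd.1 (by simpa [hν.ne'] using hY.symm)
    rw [Units.val_one, eq_comm, div_eq_one_iff_eq (RingOfIntegers.coe_ne_zero_iff.2
      (ne_zero_of_dvd_ne_zero hx0 hdvd)), RingOfIntegers.coe_injective.eq_iff, sub_right_inj,
      eq_comm, mul_eq_right₀ hY0] at hueq
    exact hζ1 hueq
  · have hle := logHeight₁_sub_div_sub_mul_le (F := K) (ζ := ζ) hν (by exact_mod_cast hζ) X Y
    have hXle := logHeight₁_le_logHeight₁_pow hν (X : K)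
    have hYle := logHeight₁_le_logHeight₁_pow hν (Y : K)
    rw [← map_pow, hX, map_add, map_intCast, map_intCast] at hXle
    rw [← map_pow, hY, map_intCast] at hYle
    rw [hueq]
    push_cast
    linarith [h.logHeight₁_snd_le K, h.logHeight₁_add_le K]
  · have hsub : ((X - Y : 𝓞 K) : K) - (X - ζ * Y : 𝓞 K) = (ζ - 1 : 𝓞 K) * Y := by
      push_cast
      ring
    have hle := adicAbv_mul_div_sub_one_le P (A := X - Y) hx0 hdvd
    rw [← hueq, hsub, map_mul] at hle
    exact hle.trans <|
      mul_le_of_le_one_left ((adicAbv K P).nonneg _) (adicAbv_integer_le_one P _)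

lemma exists_forall_padicValInt_le (hS : ∀ p ∈ S, p.Prime) (hν : 2 ≤ ν) {p : ℕ} (hp : p.Prime)
    {ε : ℝ} (hε : 0 < ε) :
    ∃ C : ℝ, ∀ {x y w z : ℤ}, IsSUnitSolution S a ν x y w z →
      padicValInt p y ≤ ε * log |(y : ℝ)| + C := by
  have hν0 : 0 < ν := zero_lt_two.trans_le hν
  obtain ⟨K, _, _, ⟨ζ, hζ, hζ1⟩, hroot⟩ := exists_numberField_forall_isSUnit_pow_eq hS hν
  obtain ⟨P, hpP⟩ := exists_natCast_mem_asIdeal (K := K) hp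
  obtain ⟨δ, hδ, hδε⟩ := exists_pos_mul_lt hε (ν * (4 * totalWeight K) : ℝ)
  obtain ⟨C, hC⟩ := exists_forall_mem_unit_le_mul_logHeight₁_add P (finite_primesAbove hS) hδ
    (pow_pos (adicAbv_natCast_pos (P := P) hp) a)
  refine ⟨max (a : ℝ) (ε * log 2 + ν * (C + 1)), fun {x y w z} h ↦ ?_⟩
  have hlog := h.log_abs_nonneg
  rcases padicValInt_le_or_of_gcd_le hp h.isSUnit_fst.1 h.gcd_le with hxa | hya
  swap
  · exact le_add_of_nonneg_of_le (by positivity) (le_max_of_le_left (Nat.cast_le.2 hya))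
  obtain ⟨u, hu, hu1, hheight, Y, hY, hle⟩ := h.exists_mem_unit hν0 hζ hζ1 hroot
  have hdiv := hC u hu hu1 (padicValInt p y / ν) <|
    calc adicAbv K P p ^ a * adicAbv K P ((u : K) - 1)
      _ ≤ adicAbv K P (x : K) * adicAbv K P ((u : K) - 1) := by
        gcongr
        exact adicAbv_pow_le_of_padicValInt_le hp hpP h.isSUnit_fst.1 hxa
      _ ≤ adicAbv K P (Y : K) := hle P
      _ ≤ (1 / 2) ^ (padicValInt p y / ν) :=
        adicAbv_le_half_pow_of_pow_eq hp hpP hν0 h.isSUnit_snd.1 hY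
  calc (padicValInt p y : ℝ) ≤ ν * ((padicValInt p y / ν : ℕ) + 1) := by
        exact_mod_cast (Nat.lt_mul_div_succ _ hν0).le
    _ ≤ ν * (δ * (4 * totalWeight K * (log 2 + log |(y : ℝ)|)) + C + 1) := by
      gcongr
      exact hdiv.trans (by gcongr)
    _ = ν * (4 * totalWeight K) * δ * (log 2 + log |(y : ℝ)|) + ν * (C + 1) := by ring
    _ ≤ ε * (log 2 + log |(y : ℝ)|) + ν * (C + 1) := by gcongr
    _ = ε * log |(y : ℝ)| + (ε * log 2 + ν * (C + 1)) := by ring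
    _ ≤ ε * log |(y : ℝ)| + max (a : ℝ) (ε * log 2 + ν * (C + 1)) := by
      gcongr
      exact le_max_right _ _

lemma finite_setOf_isSUnitSolution (hS : ∀ p ∈ S, p.Prime) (hν : 2 ≤ ν) :
    {y | ∃ x w z, IsSUnitSolution S a ν x y w z}.Finite := by
  obtain ⟨ε, hε, hfinite⟩ := exists_pos_forall_finite_of_padicValInt_le hS
  refine hfinite _ (fun y ⟨_, _, _, h⟩ ↦ h.isSUnit_snd) fun p hp ↦ ?_
  obtain ⟨C, hC⟩ := exists_forall_padicValInt_le hS hν (hS p hp) hε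
  exact ⟨C, fun y ⟨_, _, _, h⟩ ↦ hC h⟩

end FixedExponentBound

section LargeExponent

open Height AdmissibleAbsValues NumberField IsDedekindDomain HeightOneSpectrum Real

variable {S : Finset ℕ} {a n p : ℕ}

lemma isSUnit_natCast (hS : ∀ p ∈ S, p.Prime) (hp : p ∈ S) : IsSUnit S p :=
  ⟨Nat.cast_ne_zero.2 (hS p hp).ne_zero, fun _ hq hqp ↦
    (Nat.prime_dvd_prime_iff_eq hq (hS p hp)).1 (Int.natCast_dvd_natCast.1 hqp) ▸ hp⟩

namespace IsSUnitSolution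

variable {x y w z : ℤ}

lemma exists_mem_unit_pow_mul_eq (h : IsSUnitSolution S a n x y w z) (hS : ∀ p ∈ S, p.Prime)
    (hp : p ∈ S) :
    ∃ u ∈ (primesAbove (𝓞 ℚ) S).unit ℚ, ∃ ζ : ℚˣ, (∃ m : ℤ, ¬ (p : ℤ) ∣ m ∧ (ζ : ℚ) = m) ∧
      ((ζ ^ n * u : ℚˣ) : ℚ) = (x + y) / x := by
  obtain ⟨m, hm, hpm⟩ := (Int.finiteMultiplicity_iff (a := (p : ℤ)).2
    ⟨by simpa using (hS p hp).ne_one, h.base_ne_zero⟩).exists_eq_pow_mul_and_not_dvd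
  set j := multiplicity (p : ℤ) z
  have hm0 : (m : ℚ) ≠ 0 := Int.cast_ne_zero.2 fun h0 ↦ hpm (h0 ▸ dvd_zero _)
  have hmem {k : ℤ} (hk : IsSUnit S k) :
      Units.mk0 (k : ℚ) (Int.cast_ne_zero.2 hk.1) ∈ (primesAbove (𝓞 ℚ) S).unit ℚ :=
    hk.mem_unit_of_dvd dvd_rfl (by simp)
  have hpS := isSUnit_natCast hS hp
  refine ⟨_, div_mem (mul_mem (hmem h.isSUnit_coeff) (pow_mem (hmem hpS) (j * n)))
    (hmem h.isSUnit_fst), .mk0 m hm0, ⟨m, hpm, rfl⟩, ?_⟩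
  have hadd : (x + y : ℚ) = w * (p ^ j * m) ^ n := by exact_mod_cast hm ▸ h.add_eq
  rw [hadd]
  push_cast [Units.val_div_eq_div_val, Units.val_mk0]
  ring

lemma logHeight₁_add_div_le (h : IsSUnitSolution S a n x y w z) :
    logHeight₁ ((x + y) / x : ℚ) ≤ totalWeight ℚ * (log 2 + 2 * log |(y : ℝ)|) := by
  have hdiv := logHeight₁_mul_le (x + y : ℚ) (x : ℚ)⁻¹
  rw [logHeight₁_inv, ← div_eq_mul_inv] at hdiv
  linarith [h.logHeight₁_add_le ℚ, h.logHeight₁_fst_le ℚ]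

lemma adicAbv_pow_mul_add_div_sub_one_le (h : IsSUnitSolution S a n x y w z) (hp : p.Prime)
    {P : HeightOneSpectrum (𝓞 ℚ)} (hpP : (p : 𝓞 ℚ) ∈ P.asIdeal) (hxa : padicValInt p x ≤ a) :
    adicAbv ℚ P p ^ a * adicAbv ℚ P ((x + y) / x - 1) ≤ (1 / 2) ^ padicValInt p y := by
  have hx0 : (x : ℚ) ≠ 0 := Int.cast_ne_zero.2 h.isSUnit_fst.1
  calc adicAbv ℚ P p ^ a * adicAbv ℚ P ((x + y) / x - 1)
    _ ≤ adicAbv ℚ P x * adicAbv ℚ P ((x + y) / x - 1) := by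
      gcongr
      exact adicAbv_pow_le_of_padicValInt_le hp hpP h.isSUnit_fst.1 hxa
    _ = adicAbv ℚ P y := by
      rw [← map_mul, mul_sub_one, mul_div_cancel₀ _ hx0, add_sub_cancel_left]
    _ ≤ (1 / 2) ^ padicValInt p y := adicAbv_intCast_le_half_pow hp hpP h.isSUnit_snd.1

end IsSUnitSolution

lemma exists_forall_padicValInt_le_of_ge (a : ℕ) (hS : ∀ p ∈ S, p.Prime) (hp : p ∈ S) {ε : ℝ}
    (hε : 0 < ε) :
    ∃ (n₀ : ℕ) (C : ℝ), ∀ {n : ℕ} {x y w z : ℤ}, n₀ ≤ n → IsSUnitSolution S a n x y w z →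
      2 ≤ |z| → padicValInt p y ≤ ε * log |(y : ℝ)| + C := by
  obtain ⟨P, hpP⟩ := exists_natCast_mem_asIdeal (K := ℚ) (hS p hp)
  obtain ⟨δ, hδ, hδε⟩ := exists_pos_mul_lt hε (2 * totalWeight ℚ + 2 : ℝ)
  obtain ⟨n₀, C, hC⟩ := exists_forall_mem_unit_le_mul_logHeight₁_pow_mul_add P
    (finite_primesAbove hS) hδ (pow_pos (adicAbv_natCast_pos (P := P) (hS p hp)) a)
  refine ⟨n₀, max (a : ℝ) (δ * (totalWeight ℚ * log 2 + 2) + C), fun {n x y w z} hn h hz ↦ ?_⟩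
  have hlog := h.log_abs_nonneg
  rcases padicValInt_le_or_of_gcd_le (hS p hp) h.isSUnit_fst.1 h.gcd_le with hxa | hya
  swap
  · exact le_add_of_nonneg_of_le (by positivity) (le_max_of_le_left (Nat.cast_le.2 hya))
  have hx0 : (x : ℚ) ≠ 0 := Int.cast_ne_zero.2 h.isSUnit_fst.1
  have hy0 : (y : ℚ) ≠ 0 := Int.cast_ne_zero.2 h.isSUnit_snd.1
  obtain ⟨u, hu, ζ, ⟨m, hpm, hζ⟩, hval⟩ := h.exists_mem_unit_pow_mul_eq hS hp
  have hζP : adicAbv ℚ P ζ = 1 := hζ ▸ adicAbv_intCast_eq_one_of_not_dvd (hS p hp) hpP hpm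
  have hne : ζ ^ n * u ≠ 1 := fun h1 ↦ by
    rw [h1, Units.val_one, eq_comm, div_eq_one_iff_eq hx0, add_eq_left] at hval
    exact hy0 hval
  have hle := hC n hn u hu ζ hζP hne (padicValInt p y) <|
    hval ▸ h.adicAbv_pow_mul_add_div_sub_one_le (hS p hp) hpP hxa
  calc (padicValInt p y : ℝ)
    _ ≤ δ * (totalWeight ℚ * (log 2 + 2 * log |(y : ℝ)|) + (2 * log |(y : ℝ)| + 2)) + C := by
      rw [hval] at hle
      refine hle.trans ?_
      gcongr
      exacts [h.logHeight₁_add_div_le, h.natCast_le hz]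
    _ = (2 * totalWeight ℚ + 2) * δ * log |(y : ℝ)| + (δ * (totalWeight ℚ * log 2 + 2) + C) := by
      ring
    _ ≤ ε * log |(y : ℝ)| + max (a : ℝ) (δ * (totalWeight ℚ * log 2 + 2) + C) := by
      gcongr
      exact le_max_right _ _

lemma exists_finite_setOf_isSUnitSolution_ge (a : ℕ) (hS : ∀ p ∈ S, p.Prime) :
    ∃ n₀ : ℕ, {y | ∃ n ≥ n₀, ∃ x w z, IsSUnitSolution S a n x y w z ∧ 2 ≤ |z|}.Finite := by
  obtain ⟨ε, hε, hfinite⟩ := exists_pos_forall_finite_of_padicValInt_le hS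
  choose! n₀ C hC using fun p hp ↦ exists_forall_padicValInt_le_of_ge a hS (p := p) hp hε
  refine ⟨S.sup n₀, hfinite _ (fun y ⟨_, _, _, _, _, h, _⟩ ↦ h.isSUnit_snd) fun p hp ↦ ⟨C p, ?_⟩⟩
  rintro y ⟨n, hn, x, w, z, h, hz⟩
  exact hC p hp ((Finset.le_sup hp).trans hn) h hz

end LargeExponent

section Assembly

variable {S : Finset ℕ} {a n : ℕ} {x y w z : ℤ}

lemma IsSUnit.mul_of_isUnit (hw : IsSUnit S w) (hz : IsUnit z) : IsSUnit S (w * z) :=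
  ⟨mul_ne_zero hw.1 hz.ne_zero, fun p hp hdvd ↦ hw.2 p hp (hz.dvd_mul_right.1 hdvd)⟩

lemma IsSUnitSolution.of_isUnit (h : IsSUnitSolution S a n x y w z) (hz : IsUnit z) (k : ℕ) :
    IsSUnitSolution S a k x y (w * z ^ n) 1 where
  __ := h
  isSUnit_coeff := h.isSUnit_coeff.mul_of_isUnit (hz.pow n)
  base_ne_zero := one_ne_zero
  add_eq := by rw [one_pow, mul_one, h.add_eq]

lemma finite_setOf_exists_isSUnitSolution (a : ℕ) (hS : ∀ p ∈ S, p.Prime) :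
    {y | ∃ n ≥ 2, ∃ x w z, IsSUnitSolution S a n x y w z}.Finite := by
  obtain ⟨n₀, hlarge⟩ := exists_finite_setOf_isSUnitSolution_ge a hS
  have hsmall : (⋃ n ∈ Set.Icc 2 (n₀ + 2), {y | ∃ x w z, IsSUnitSolution S a n x y w z}).Finite :=
    (Set.finite_Icc _ _).biUnion fun n hn ↦ finite_setOf_isSUnitSolution hS hn.1
  refine (hsmall.union hlarge).subset fun y ⟨n, hn, x, w, z, h⟩ ↦ ?_
  rcases le_or_gt n (n₀ + 2) with hle | hlt
  · exact .inl (Set.mem_biUnion ⟨hn, hle⟩ ⟨x, w, z, h⟩)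
  by_cases hz : IsUnit z
  · exact .inl (Set.mem_biUnion (x := 2) ⟨le_rfl, by omega⟩ ⟨x, _, _, h.of_isUnit hz 2⟩)
  · have hz1 := Int.one_le_abs h.base_ne_zero
    have hzne : |z| ≠ 1 := fun h1 ↦ hz (Int.isUnit_iff_abs_eq.2 h1)
    exact .inr ⟨n, by omega, x, w, z, h, by omega⟩

lemma IsSUnitSolution.abs_coeff_le (h : IsSUnitSolution S a n x y w z) : |w| ≤ 2 * |y| :=
  calc |w| ≤ |w| * |z ^ n| :=
        le_mul_of_one_le_right (abs_nonneg w) (Int.one_le_abs (pow_ne_zero n h.base_ne_zero))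
    _ = |x + y| := by rw [h.add_eq, abs_mul]
    _ ≤ 2 * |y| := h.abs_add_le

end Assembly

theorem finitely_many_sums_of_S_units_perfect_power
    (S : Finset ℕ) (hS : ∀ p ∈ S, p.Prime) (a : ℕ) (ha : 0 < a) :
    {t : ℤ × ℤ × ℤ | IsSUnit S t.1 ∧ IsSUnit S t.2.1 ∧ IsSUnit S t.2.2 ∧
      Int.gcd t.1 t.2.1 ≤ a ∧
      ∃ n : ℕ, 2 ≤ n ∧ ∃ z : ℤ, z ≠ 0 ∧ t.1 + t.2.1 = t.2.2 * z ^ n}.Finite := by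
  obtain ⟨Y, hY⟩ := ((finite_setOf_exists_isSUnitSolution a hS).image abs).bddAbove
  have hbound {n : ℕ} {x y w z : ℤ} (hn : 2 ≤ n) (h : IsSUnitSolution S a n x y w z) :
      |x| ≤ Y ∧ |y| ≤ Y ∧ |w| ≤ 2 * Y := by
    have hy : |y| ≤ Y := hY ⟨y, ⟨n, hn, x, w, z, h⟩, rfl⟩
    exact ⟨h.abs_le.trans hy, hy, h.abs_coeff_le.trans (by gcongr)⟩
  refine ((Set.finite_Icc (-Y) Y).prod
    ((Set.finite_Icc (-Y) Y).prod (Set.finite_Icc (-(2 * Y)) (2 * Y)))).subset ?_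
  rintro ⟨x, y, w⟩ ⟨hx, hy, hw, hgcd, n, hn, z, hz, heq⟩
  rcases le_total |x| |y| with hle | hle
  · obtain ⟨hxY, hyY, hwY⟩ := hbound hn ⟨hx, hy, hw, hgcd, hle, hz, heq⟩
    exact ⟨abs_le.1 hxY, abs_le.1 hyY, abs_le.1 hwY⟩
  · obtain ⟨hyY, hxY, hwY⟩ :=
      hbound hn ⟨hy, hx, hw, Int.gcd_comm x y ▸ hgcd, hle, hz, add_comm x y ▸ heq⟩
    exact ⟨abs_le.1 hxY, abs_le.1 hyY, abs_le.1 hwY⟩
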